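/- arXiv:1204.4513 — 2 statements merged into one kernel-verified Lean document; each statement's English description precedes it below -/
import Mathlib

section
/- Let (R, 𝔪, k) be a commutative noetherian local ring and let M and N be nonzero finitely generated R-modules. Assume AB-dim_R M < ∞. If P_R(M,N) < ∞ (i.e. Ext^n_R(M,N) = 0 for all sufficiently large n), then P_R(M,N) = depth R − depth_R M. -/
/-! Let `t = depth R`. By Rees, the depth of a nonzero finitely generated module `X` is the least
`i` with `Ext^i(k, X) ≠ 0` (`rdepth_eq`). Two facts about `M` combine.

**The Auslander–Bridger formula** (`exists_ab`). If `M` has finite G-dimension, let `p` be the last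
degree in which `Ext(M, R)` is nonzero; then `p + depth M = t`. For a nonzero totally reflexive `G`,
`p = 0` because `G*` is nonzero. Embedding `G` in a finite free module with totally reflexive
cokernel (`exists_cores`) gives `Ext^i(k, G) = 0` for `i < t` and identifies `Ext^t(k, G)` with
`Hom(G*, Ext^t(k, R))` (`tr_ext_eq_zero`, `tr_exists_ext`); the latter is nonzero because
`Ext^t(k, R)` is a nonzero `k`-vector space, so `depth G = t`. The general case is an induction
along a resolution `0 → K → G → M → 0`. If `K` is not totally reflexive, both invariants shift
by one. If `K` is totally reflexive, either `Ext^1(M, R) = 0` and `M` is totally reflexive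
(`tr_of_ses`), or `G* → K*` is not surjective, so that `Ext^t(k, K) → Ext^t(k, G)` has a kernel and
`depth M = t - 1`.

**Nonvanishing of `Ext^p(M, N)`.** Finiteness of the AB-dimension gives a uniform bound for the
degrees in which `Ext(M, -)` is nonzero on `M^⊥`. Shifting along syzygies, which stay in `M^⊥`, this
bound improves to `p` (`ev_of_lt`). Therefore `Ext^p(M, -)` is right exact on a free presentation
of `N`, and `Ext^p(M, N)` is the cokernel of a presentation matrix of `N` acting on copies of the
nonzero finitely generated module `Ext^p(M, R)`. It is nonzero after reduction to `k`
(`not_ev_of_perp`), so `P(M, N) = p = t - depth M`.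
-/


open CategoryTheory IsLocalRing

noncomputable section

universe u

variable (R : Type u) [CommRing R]

/-- The Ext group `Ext^n_R(M, N)` vanishes. -/
def ExtVanishes (M : Type u) [AddCommGroup M] [Module R M]
    (N : Type u) [AddCommGroup N] [Module R N] (n : ℕ) : Prop :=
  Subsingleton (((Ext R (ModuleCat.{u} R) n).obj
    (Opposite.op (ModuleCat.of R M))).obj (ModuleCat.of R N))

/-- `N ∈ M^⊥`, i.e. `Ext^n_R(M,N) = 0` for all sufficiently large `n`. -/
def MemPerp (M : Type u) [AddCommGroup M] [Module R M]
    (N : Type u) [AddCommGroup N] [Module R N] : Prop :=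
  ∃ d : ℕ, ∀ n ≥ d, ExtVanishes R M N n

/-- `P_R(M,N) = sup { n | Ext^n_R(M,N) ≠ 0 }`, an element of `{-∞} ∪ ℕ ∪ {∞}`;
it is `⊥ = -∞` when every `Ext^n_R(M,N)` vanishes. -/
def extP (M : Type u) [AddCommGroup M] [Module R M]
    (N : Type u) [AddCommGroup N] [Module R N] : WithBot ℕ∞ :=
  sSup {x : WithBot ℕ∞ | ∃ n : ℕ, ¬ ExtVanishes R M N n ∧ x = (n : ℕ∞)}

/-- `P_R(M) = sup { P_R(M,N) | N ∈ M^⊥ }`, the sup being taken over all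
finitely generated modules in `M^⊥`. -/
def extPsup (M : Type u) [AddCommGroup M] [Module R M] : WithBot ℕ∞ :=
  sSup {x : WithBot ℕ∞ | ∃ (N : Type u) (_ : AddCommGroup N) (_ : Module R N),
    Module.Finite R N ∧ MemPerp R M N ∧ x = extP R M N}

/-- A module `G` is totally reflexive if the biduality map `G → G**` is bijective and
`Ext^n_R(G,R) = 0 = Ext^n_R(G*,R)` for all `n > 0`. -/
def IsTotallyReflexive (G : Type u) [AddCommGroup G] [Module R G] : Prop :=
  Function.Bijective (Module.Dual.eval R G) ∧
    (∀ n > 0, ExtVanishes R G R n) ∧ (∀ n > 0, ExtVanishes R (Module.Dual R G) R n)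

/-- `G-dim_R M ≤ n`: there is a resolution of `M` of length `n` by finitely generated
totally reflexive modules. -/
def GdimLE : ℕ → ModuleCat.{u} R → Prop
  | 0, M => IsTotallyReflexive R M
  | n + 1, M => ∃ G : ModuleCat.{u} R, Module.Finite R G ∧ IsTotallyReflexive R G ∧
      ∃ f : G →ₗ[R] M, Function.Surjective f ∧ GdimLE n (ModuleCat.of R (LinearMap.ker f))

/-- The G-dimension of `M`, as an element of `ℕ∞`. -/
def gdim (M : Type u) [AddCommGroup M] [Module R M] : ℕ∞ :=
  sInf {x : ℕ∞ | ∃ n : ℕ, GdimLE R n (ModuleCat.of R M) ∧ x = n}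

/-- `pd_R M ≤ n`: there is a projective resolution of `M` of length `n` by finitely
generated projective modules. -/
def ProjDimLE : ℕ → ModuleCat.{u} R → Prop
  | 0, M => Module.Projective R M
  | n + 1, M => ∃ P : ModuleCat.{u} R, Module.Finite R P ∧ Module.Projective R P ∧
      ∃ f : P →ₗ[R] M, Function.Surjective f ∧ ProjDimLE n (ModuleCat.of R (LinearMap.ker f))

/-- The projective dimension of `M`, as an element of `ℕ∞`. -/
def projdim (M : Type u) [AddCommGroup M] [Module R M] : ℕ∞ :=
  sInf {x : ℕ∞ | ∃ n : ℕ, ProjDimLE R n (ModuleCat.of R M) ∧ x = n}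

/-- `injdim_R M ≤ n`: there is an injective resolution of `M` of length `n`. -/
def InjDimLE : ℕ → ModuleCat.{u} R → Prop
  | 0, M => Module.Injective R M
  | n + 1, M => ∃ I : ModuleCat.{u} R, Module.Injective R I ∧
      ∃ f : M →ₗ[R] I, Function.Injective f ∧
        InjDimLE n (ModuleCat.of R (I ⧸ LinearMap.range f))

/-- `R` is Gorenstein: `R` has finite injective dimension as a module over itself. -/
def IsGorensteinRing : Prop := ∃ n : ℕ, InjDimLE R n (ModuleCat.of R R)

/-- `AB-dim_R M = sup { G-dim_R M, P_R(M) }`. -/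
def abdim (M : Type u) [AddCommGroup M] [Module R M] : WithBot ℕ∞ :=
  max ((gdim R M : ℕ∞) : WithBot ℕ∞) (extPsup R M)

/-- The depth of `M`: the length of a maximal `M`-regular sequence contained in the
maximal ideal (expressed as the sup of lengths of such regular sequences). -/
def rdepth [IsLocalRing R] (M : Type u) [AddCommGroup M] [Module R M] : ℕ∞ :=
  sSup {x : ℕ∞ | ∃ rs : List R, (∀ r ∈ rs, r ∈ maximalIdeal R) ∧
    RingTheory.Sequence.IsRegular M rs ∧ x = rs.length}

/-- `S` is a first syzygy `Ω M` of `M`: the kernel of a minimal free cover of `M`. -/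
def IsSyzygyOf [IsLocalRing R] (S M : ModuleCat.{u} R) : Prop :=
  ∃ F : ModuleCat.{u} R, Module.Free R F ∧ Module.Finite R F ∧
    ∃ π : F →ₗ[R] M, Function.Surjective π ∧
      LinearMap.ker π ≤ (maximalIdeal R) • (⊤ : Submodule R F) ∧
      Nonempty (S ≃ₗ[R] LinearMap.ker π)

/-- `S` is an `n`-th syzygy `Ω^n M` of `M`. -/
def IsNthSyzygyOf [IsLocalRing R] : ℕ → ModuleCat.{u} R → ModuleCat.{u} R → Prop
  | 0, S, M => Nonempty (S ≃ₗ[R] M)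
  | n + 1, S, M => ∃ T : ModuleCat.{u} R, IsSyzygyOf R T M ∧ IsNthSyzygyOf n S T

end

namespace ABFormula

universe u

variable {R : Type u} [CommRing R]

/-! ### Comparison of the two models of `Ext` -/

section Bridge

variable {X Y : ModuleCat.{u} R}

/-- The `Ext` functor defined by derived functors is computed by any projective resolution. -/
lemma subsingleton_ext_iff_exactAt (P : ProjectiveResolution X) (n : ℕ) :
    Subsingleton (((Ext R (ModuleCat.{u} R) n).obj (Opposite.op X)).obj Y) ↔
      (P.complex.linearYonedaObj R Y).ExactAt n := by
  rw [HomologicalComplex.exactAt_iff_isZero_homology, ← (P.isoExt n Y).isZero_iff]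
  exact ⟨fun _ => ModuleCat.isZero_of_subsingleton _, fun h => ModuleCat.subsingleton_of_isZero h⟩

/-- Elementwise form of exactness: each cocycle is a coboundary; `p` is the previous degree, which
is `0` itself when `n = 0`. -/
lemma exactAt_iff (P : ProjectiveResolution X) (n p : ℕ) (hp : (ComplexShape.up ℕ).prev n = p) :
    (P.complex.linearYonedaObj R Y).ExactAt n ↔
      ∀ f : P.complex.X n ⟶ Y, P.complex.d (n + 1) n ≫ f = 0 →
        ∃ g : P.complex.X p ⟶ Y, P.complex.d n p ≫ g = f := by
  rw [HomologicalComplex.exactAt_iff' _ p n (n + 1) hp (by simp),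
    ShortComplex.moduleCat_exact_iff]
  rfl

/-- The `Ext` groups defined by derived functors and those defined in the derived category vanish
simultaneously: both vanish if and only if each cocycle `P_n → Y` on a projective resolution
of `X` is a coboundary. -/
lemma bridge (n : ℕ) :
    Subsingleton (((Ext R (ModuleCat.{u} R) n).obj (Opposite.op X)).obj Y) ↔
      Subsingleton (Abelian.Ext X Y n) := by
  let P := ProjectiveResolution.of X
  rw [subsingleton_ext_iff_exactAt P]
  rcases n with _ | n
  · rw [exactAt_iff P 0 0 (by simp)]
    constructor
    · intro h
      refine subsingleton_of_forall_eq 0 fun α => ?_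
      obtain ⟨f, hf, rfl⟩ := P.extMk_surjective α 1 rfl
      obtain ⟨g, rfl⟩ := h f hf
      simp
    · intro h f hf
      have hX : ∀ g : X ⟶ Y, g = 0 := fun g =>
        (Abelian.Ext.mk₀_eq_zero_iff g).1 (Subsingleton.elim _ _)
      have hS := P.exact₀
      have : Epi (P.π.f 0) := inferInstance
      obtain ⟨g, hg⟩ : ∃ g, P.π.f 0 ≫ g = f :=
        ⟨hS.desc f hf, hS.g_desc f hf⟩
      refine ⟨0, ?_⟩
      have := hX g
      rw [← hg, this]
      exact Limits.comp_zero.trans Limits.comp_zero.symm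
  · rw [exactAt_iff P (n + 1) n (by simp)]
    constructor
    · intro h
      refine subsingleton_of_forall_eq 0 fun α => ?_
      obtain ⟨f, hf, rfl⟩ := P.extMk_surjective α (n + 2) rfl
      exact (P.extMk_eq_zero_iff f _ rfl hf n rfl).2 (h f hf)
    · intro h f hf
      exact (P.extMk_eq_zero_iff f _ rfl hf n rfl).1 (Subsingleton.elim _ _)

end Bridge

lemma extVanishes_iff (M : Type u) [AddCommGroup M] [Module R M]
    (N : Type u) [AddCommGroup N] [Module R N] (n : ℕ) :
    ExtVanishes R M N n ↔ Subsingleton (Abelian.Ext (ModuleCat.of R M) (ModuleCat.of R N) n) :=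
  bridge n

/-! ### Long exact sequences -/

section LES

variable {A B C : Type u} [AddCommGroup A] [Module R A] [AddCommGroup B] [Module R B]
  [AddCommGroup C] [Module R C] {f : A →ₗ[R] B} {g : B →ₗ[R] C}

/-- The short complex of `R`-modules given by an exact pair of linear maps. -/
abbrev ses (hfg : Function.Exact f g) : ShortComplex (ModuleCat.{u} R) :=
  ModuleCat.shortComplexOfCompEqZero f g hfg.linearMap_comp_eq_zero

lemma ses_shortExact (hfg : Function.Exact f g) (hf : Function.Injective f)
    (hg : Function.Surjective g) : (ses hfg).ShortExact where
  exact := ModuleCat.shortComplex_exact _ hfg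
  mono_f := (ModuleCat.mono_iff_injective _).2 hf
  epi_g := (ModuleCat.epi_iff_surjective _).2 hg

/-- `Ext^i_R(M, N) = 0`, phrased with the `Ext` groups of the derived category, for which long
exact sequences and composition products are available. -/
abbrev EV (R : Type u) [CommRing R] (M N : Type u) [AddCommGroup M] [Module R M]
    [AddCommGroup N] [Module R N] (i : ℕ) : Prop :=
  Subsingleton (Abelian.Ext (ModuleCat.of R M) (ModuleCat.of R N) i)

variable (X : Type u) [AddCommGroup X] [Module R X]

variable (hfg : Function.Exact f g) (hf : Function.Injective f) (hg : Function.Surjective g)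

include hfg hf hg

lemma ev_cov₃ {i : ℕ} (h₂ : EV R X B i) (h₁ : EV R X A (i + 1)) : EV R X C i := by
  refine subsingleton_of_forall_eq 0 fun x => ?_
  obtain ⟨y, rfl⟩ := Abelian.Ext.covariant_sequence_exact₃ (ModuleCat.of R X)
    (ses_shortExact hfg hf hg) x rfl (h₁.elim _ _)
  rw [h₂.elim y 0, Abelian.Ext.zero_comp]

lemma ev_cov₁ {i : ℕ} (h₃ : EV R X C i) (h₂ : EV R X B (i + 1)) : EV R X A (i + 1) := by
  refine subsingleton_of_forall_eq 0 fun x => ?_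
  obtain ⟨y, rfl⟩ := Abelian.Ext.covariant_sequence_exact₁ (ModuleCat.of R X)
    (ses_shortExact hfg hf hg) x (h₂.elim _ _) rfl
  rw [h₃.elim y 0, Abelian.Ext.zero_comp]

lemma ev_con₁ {i : ℕ} (h₂ : EV R B X i) (h₃ : EV R C X (i + 1)) : EV R A X i := by
  refine subsingleton_of_forall_eq 0 fun x => ?_
  obtain ⟨y, rfl⟩ := Abelian.Ext.contravariant_sequence_exact₁
    (ses_shortExact hfg hf hg) (ModuleCat.of R X) x (add_comm 1 i) (h₃.elim _ _)
  rw [h₂.elim y 0, Abelian.Ext.comp_zero]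

lemma ev_con₃ {i : ℕ} (h₁ : EV R A X i) (h₂ : EV R B X (i + 1)) : EV R C X (i + 1) := by
  refine subsingleton_of_forall_eq 0 fun x => ?_
  obtain ⟨y, rfl⟩ := Abelian.Ext.contravariant_sequence_exact₃
    (ses_shortExact hfg hf hg) (ModuleCat.of R X) x (h₂.elim _ _) (add_comm 1 i)
  rw [h₁.elim y 0, Abelian.Ext.comp_zero]

/-- If `Ext^{i-1}_R(X, C) = 0` (no condition when `i = 0`), then `Ext^i_R(X, -)` preserves the
injection `A → B`. -/
lemma ext_comp_injective {i : ℕ} (h : ∀ j, j + 1 = i → EV R X C j)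
    (x : Abelian.Ext (ModuleCat.of R X) (ModuleCat.of R A) i)
    (hx : x.comp (Abelian.Ext.mk₀ (ModuleCat.ofHom f)) (add_zero i) = 0) : x = 0 := by
  have hS := ses_shortExact hfg hf hg
  rcases i with _ | i
  · have : Mono (ModuleCat.ofHom f) := (ModuleCat.mono_iff_injective _).2 hf
    exact Abelian.Ext.postcomp_mk₀_injective_of_mono (ModuleCat.of R X) (ModuleCat.ofHom f)
      (a₁ := x) (a₂ := 0) (by simpa using hx)
  · obtain ⟨y, rfl⟩ := Abelian.Ext.covariant_sequence_exact₁ (ModuleCat.of R X) hS x hx rfl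
    rw [(h i rfl).elim y 0, Abelian.Ext.zero_comp]

lemma exists_extension (h : EV R C X 1) (φ : A →ₗ[R] X) : ∃ ψ : B →ₗ[R] X, ψ ∘ₗ f = φ := by
  obtain ⟨y, hy⟩ := Abelian.Ext.contravariant_sequence_exact₁
    (ses_shortExact hfg hf hg) (ModuleCat.of R X) (Abelian.Ext.mk₀ (ModuleCat.ofHom φ))
    (add_comm 1 0) (h.elim _ _)
  obtain ⟨y, rfl⟩ := (Abelian.Ext.mk₀_bijective _ _).2 y
  rw [Abelian.Ext.mk₀_comp_mk₀] at hy
  have := (Abelian.Ext.mk₀_bijective _ _).1 hy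
  exact ⟨y.hom, by simpa using congrArg ModuleCat.Hom.hom this⟩

lemma ev_one_of_extension (h : ∀ φ : A →ₗ[R] X, ∃ ψ : B →ₗ[R] X, ψ ∘ₗ f = φ)
    (hB : EV R B X 1) : EV R C X 1 := by
  refine subsingleton_of_forall_eq 0 fun x => ?_
  obtain ⟨y, rfl⟩ := Abelian.Ext.contravariant_sequence_exact₃
    (ses_shortExact hfg hf hg) (ModuleCat.of R X) x (hB.elim _ _) (add_comm 1 0)
  obtain ⟨y, rfl⟩ := (Abelian.Ext.mk₀_bijective _ _).2 y
  obtain ⟨ψ, hψ⟩ := h y.hom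
  have : y = (ses hfg).f ≫ ModuleCat.ofHom ψ := by
    ext1
    exact hψ.symm
  rw [this, ← Abelian.Ext.mk₀_comp_mk₀, ShortComplex.ShortExact.extClass_comp_assoc]

end LES

lemma ev_zero_iff (M N : Type u) [AddCommGroup M] [Module R M] [AddCommGroup N] [Module R N] :
    EV R M N 0 ↔ Subsingleton (M →ₗ[R] N) :=
  (Abelian.Ext.addEquiv₀.trans ModuleCat.homAddEquiv).subsingleton_congr

lemma ev_of_projective (M N : Type u) [AddCommGroup M] [Module R M] [AddCommGroup N] [Module R N]
    [Module.Projective R M] (i : ℕ) : EV R M N (i + 1) :=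
  subsingleton_of_forall_eq 0 fun x => Abelian.Ext.eq_zero_of_projective x

lemma ev_of_subsingleton (M N : Type u) [AddCommGroup M] [Module R M] [AddCommGroup N]
    [Module R N] [Subsingleton M] (i : ℕ) : EV R M N i := by
  refine subsingleton_of_forall_eq 0 fun x => ?_
  rw [← Abelian.Ext.mk₀_id_comp x,
    (ModuleCat.isZero_of_subsingleton (ModuleCat.of R M)).eq_of_src (𝟙 _) 0]
  simp

/-! ### `Ext` into finite free modules -/

section Free

variable {X : ModuleCat.{u} R} {n i : ℕ}

/-- The projection of `R ^ n` to its `j`-th coordinate. -/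
abbrev prj (n : ℕ) (j : Fin n) : (Fin n → R) →ₗ[R] R := LinearMap.proj j

/-- Composition of a class in `Ext^i_R(X, A)` with a linear map `A → B`. -/
noncomputable abbrev push {A B : Type u} [AddCommGroup A] [Module R A] [AddCommGroup B] [Module R B]
    (α : Abelian.Ext X (ModuleCat.of R A) i) (u : A →ₗ[R] B) :
    Abelian.Ext X (ModuleCat.of R B) i :=
  α.comp (Abelian.Ext.mk₀ (ModuleCat.ofHom u)) (add_zero i)

variable {A B C : Type u} [AddCommGroup A] [Module R A] [AddCommGroup B] [Module R B]
  [AddCommGroup C] [Module R C]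

lemma push_push (α : Abelian.Ext X (ModuleCat.of R A) i) (u : A →ₗ[R] B) (v : B →ₗ[R] C) :
    push (push α u) v = push α (v ∘ₗ u) := by
  simp [push, ← Abelian.Ext.mk₀_comp_mk₀]

lemma push_add (α : Abelian.Ext X (ModuleCat.of R A) i) (u v : A →ₗ[R] B) :
    push α (u + v) = push α u + push α v := by
  simp [push, Abelian.Ext.mk₀_add]

lemma push_smul (α : Abelian.Ext X (ModuleCat.of R A) i) (r : R) (u : A →ₗ[R] B) :
    push α (r • u) = r • push α u := by
  have : ModuleCat.ofHom (r • u) = r • ModuleCat.ofHom u := rfl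
  rw [push, this, Abelian.Ext.mk₀_smul, Abelian.Ext.comp_smul]

lemma push_zero (α : Abelian.Ext X (ModuleCat.of R A) i) :
    push α (0 : A →ₗ[R] B) = 0 := by
  simp [push]

lemma push_id (α : Abelian.Ext X (ModuleCat.of R A) i) : push α LinearMap.id = α := by
  simp [push]

/-- `push` as a linear map in the linear map along which one pushes. -/
noncomputable def pushHom (α : Abelian.Ext X (ModuleCat.of R A) i) :
    (A →ₗ[R] B) →ₗ[R] Abelian.Ext X (ModuleCat.of R B) i where
  toFun u := push α u
  map_add' := push_add α
  map_smul' r u := push_smul α r u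

lemma sum_push {ι : Type*} [Fintype ι] (α : ι → Abelian.Ext X (ModuleCat.of R A) i)
    (u : A →ₗ[R] B) : push (∑ j, α j) u = ∑ j, push (α j) u :=
  Abelian.Ext.sum_comp _ _ _

lemma push_sum {ι : Type*} [Fintype ι] (α : Abelian.Ext X (ModuleCat.of R A) i)
    (u : ι → A →ₗ[R] B) : push α (∑ j, u j) = ∑ j, push α (u j) :=
  map_sum (pushHom α) _ _

lemma sum_prj (u : (Fin n → R) →ₗ[R] A) :
    u = ∑ j, LinearMap.toSpanSingleton R A (u (Pi.single j 1)) ∘ₗ prj n j := by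
  ext j
  simp [LinearMap.toSpanSingleton_apply, Pi.single_apply, ite_smul]

lemma sum_prj' (u : (Fin n → R) →ₗ[R] R) : u = ∑ j, u (Pi.single j 1) • prj n j := by
  ext j
  simp [Pi.single_apply]

lemma ext_free_eq_zero (α : Abelian.Ext X (ModuleCat.of R (Fin n → R)) i)
    (h : ∀ j, push α (prj n j) = 0) : α = 0 := by
  rw [← push_id α, sum_prj (LinearMap.id (R := R) (M := Fin n → R)), push_sum]
  exact Finset.sum_eq_zero fun j _ => by rw [← push_push, h, push, Abelian.Ext.zero_comp]

lemma exists_ext_free (β : Fin n → Abelian.Ext X (ModuleCat.of R R) i) :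
    ∃ α : Abelian.Ext X (ModuleCat.of R (Fin n → R)) i, ∀ j, push α (prj n j) = β j := by
  refine ⟨∑ l, push (β l) (LinearMap.single R (fun _ : Fin n => R) l), fun j => ?_⟩
  rw [sum_push, Finset.sum_eq_single j]
  · rw [push_push, LinearMap.proj_comp_single_same, push_id]
  · intro l _ hl
    rw [push_push, LinearMap.proj_comp_single_ne _ _ _ _ hl.symm, push_zero]
  · simp

lemma ev_free (X : Type u) [AddCommGroup X] [Module R X] (h : EV R X R i) :
    EV R X (Fin n → R) i :=
  subsingleton_of_forall_eq 0 fun α => ext_free_eq_zero α fun _ => h.elim _ _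

end Free

/-! ### Totally reflexive modules -/

section TotallyReflexive

/-- Total reflexivity of `G`, phrased with `EV`. -/
structure TR (R : Type u) [CommRing R] (G : Type u) [AddCommGroup G] [Module R G] : Prop where
  bij : Function.Bijective (Module.Dual.eval R G)
  ev : ∀ i, EV R G R (i + 1)
  ev_dual : ∀ i, EV R (Module.Dual R G) R (i + 1)

lemma tr_of_isTotallyReflexive {G : Type u} [AddCommGroup G] [Module R G]
    (h : IsTotallyReflexive R G) : TR R G where
  bij := h.1
  ev i := (extVanishes_iff _ _ _).1 (h.2.1 (i + 1) i.succ_pos)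
  ev_dual i := (extVanishes_iff _ _ _).1 (h.2.2 (i + 1) i.succ_pos)

variable {A B C : Type u} [AddCommGroup A] [Module R A] [AddCommGroup B] [Module R B]
  [AddCommGroup C] [Module R C] {f : A →ₗ[R] B} {g : B →ₗ[R] C}

/-- A cokernel of an injection of totally reflexive modules is totally reflexive as soon as its
higher `Ext` groups into `R` vanish: the dual sequence is again exact, and biduality passes to
the cokernel by the five lemma. -/
lemma tr_of_ses (hfg : Function.Exact f g) (hf : Function.Injective f)
    (hg : Function.Surjective g) (hA : TR R A) (hB : TR R B) (hC : ∀ i, EV R C R (i + 1)) :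
    TR R C := by
  have hext : Function.Surjective f.dualMap := fun φ =>
    exists_extension R hfg hf hg (hC 0) φ
  have hginj : Function.Injective g.dualMap := by
    intro φ ψ h
    ext c
    obtain ⟨b, rfl⟩ := hg c
    exact LinearMap.congr_fun h b
  have hdual : Function.Exact g.dualMap f.dualMap := by
    intro φ
    constructor
    · intro h
      have hk : LinearMap.ker g ≤ LinearMap.ker φ := by
        intro b hb
        obtain ⟨a, rfl⟩ := (hfg b).1 hb
        exact LinearMap.congr_fun h a
      refine ⟨(LinearMap.ker g).liftQ φ hk ∘ₗ
        (g.quotKerEquivOfSurjective hg).symm.toLinearMap, ?_⟩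
      ext b
      have : (g.quotKerEquivOfSurjective hg).symm (g b) = (LinearMap.ker g).mkQ b := by
        rw [LinearEquiv.symm_apply_eq]; rfl
      simp [LinearMap.dualMap_apply, this]
    · rintro ⟨ψ, rfl⟩
      ext a
      simp [LinearMap.dualMap_apply, hfg.apply_apply_eq_zero]
  refine ⟨⟨?_, ?_⟩, hC, fun i => ev_con₁ R hdual hginj hext (hB.ev_dual i) (hA.ev_dual (i + 1))⟩
  · rw [injective_iff_map_eq_zero]
    intro c hc
    obtain ⟨b, rfl⟩ := hg c
    -- `ev_b` vanishes on `C*`, so it factors through `A*` and comes from an element of `A`.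
    have hk : LinearMap.ker f.dualMap ≤ LinearMap.ker (Module.Dual.eval R B b) := by
      intro φ hφ
      obtain ⟨ψ, rfl⟩ := (hdual φ).1 hφ
      exact LinearMap.congr_fun hc ψ
    obtain ⟨a, ha⟩ := hA.bij.2 ((LinearMap.ker f.dualMap).liftQ _ hk ∘ₗ
        (f.dualMap.quotKerEquivOfSurjective hext).symm.toLinearMap)
    have : f a = b := by
      apply hB.bij.1
      ext φ
      have h1 := LinearMap.congr_fun ha (f.dualMap φ)
      have h2 : (f.dualMap.quotKerEquivOfSurjective hext).symm (f.dualMap φ) =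
          (LinearMap.ker f.dualMap).mkQ φ := by
        rw [LinearEquiv.symm_apply_eq]; rfl
      rw [LinearMap.comp_apply, LinearEquiv.coe_coe, h2] at h1
      simpa using h1
    rw [← this, hfg.apply_apply_eq_zero]
  · intro Ψ
    obtain ⟨Φ, hΦ⟩ := exists_extension R hdual hginj hext (hA.ev_dual 0) Ψ
    obtain ⟨b, rfl⟩ := hB.bij.2 Φ
    exact ⟨g b, by ext φ; exact LinearMap.congr_fun hΦ φ⟩

lemma tr_of_subsingleton (G : Type u) [AddCommGroup G] [Module R G] [Subsingleton G] : TR R G := by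
  have : Subsingleton (Module.Dual R G) := ⟨fun φ ψ => by ext x; simp [Subsingleton.elim x 0]⟩
  have : Subsingleton (Module.Dual R (Module.Dual R G)) :=
    ⟨fun φ ψ => by ext x; simp [Subsingleton.elim x 0]⟩
  exact ⟨⟨fun _ _ _ => Subsingleton.elim _ _, fun y => ⟨0, Subsingleton.elim _ _⟩⟩,
    fun _ => ev_of_subsingleton _ _ _, fun _ => ev_of_subsingleton _ _ _⟩

lemma tr_free (n : ℕ) : TR R (Fin n → R) :=
  ⟨Module.bijective_dual_eval R _, fun _ => ev_of_projective _ _ _,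
    fun _ => ev_of_projective _ _ _⟩

/-- A totally reflexive module embeds in a finite free module with totally reflexive cokernel, in
such a way that every functional extends: dualize a free cover of `G*`. -/
lemma exists_cores [IsNoetherianRing R] (G : Type u) [AddCommGroup G] [Module R G]
    [Module.Finite R G] (hG : TR R G) :
    ∃ (n : ℕ) (ι : G →ₗ[R] (Fin n → R)), Function.Injective ι ∧
      TR R ((Fin n → R) ⧸ LinearMap.range ι) ∧
      ∀ h : G →ₗ[R] R, ∃ u : (Fin n → R) →ₗ[R] R, u ∘ₗ ι = h := by
  obtain ⟨n, π, hπ⟩ := Module.Finite.exists_fin' R (Module.Dual R G)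
  let ι : G →ₗ[R] (Fin n → R) := LinearMap.pi fun j => π (Pi.single j 1)
  have hu : ∀ h : G →ₗ[R] R, ∃ u : (Fin n → R) →ₗ[R] R, u ∘ₗ ι = h := by
    intro h
    obtain ⟨v, rfl⟩ := hπ h
    refine ⟨∑ j, v j • prj n j, ?_⟩
    ext x
    have hv : v = ∑ j, v j • Pi.single j (1 : R) := by
      ext l
      simp [Finset.sum_apply, Pi.single_apply]
    conv_rhs => rw [hv]
    simp [ι]
  have hι : Function.Injective ι := by
    rw [injective_iff_map_eq_zero]
    intro x hx
    apply hG.bij.1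
    ext h
    obtain ⟨u, rfl⟩ := hu h
    simp [hx]
  have hex : Function.Exact ι (LinearMap.range ι).mkQ := LinearMap.exact_map_mkQ_range ι
  have hs := Submodule.mkQ_surjective (LinearMap.range ι)
  refine ⟨n, ι, hι, tr_of_ses hex hι hs hG (tr_free n) ?_, hu⟩
  rintro (_ | i)
  · exact ev_one_of_extension R hex hι hs hu (ev_of_projective _ _ _)
  · exact ev_con₃ R hex hι hs (hG.ev i) (ev_of_projective _ _ _)

end TotallyReflexive

/-! ### Depth and the residue field -/

section Depth

variable [IsLocalRing R]

variable (R) in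
/-- The residue field, as the quotient `R ⧸ 𝔪`, which lives in the universe of `R`. -/
abbrev kk : Type u := R ⧸ IsLocalRing.maximalIdeal R

lemma support_kk :
    Module.support R (kk R) = PrimeSpectrum.zeroLocus (IsLocalRing.maximalIdeal R : Set R) := by
  rw [Module.support_eq_zeroLocus, Ideal.annihilator_quotient]

lemma smul_top_lt (M : Type u) [AddCommGroup M] [Module R M] [Module.Finite R M] [Nontrivial M] :
    IsLocalRing.maximalIdeal R • (⊤ : Submodule R M) < ⊤ := by
  refine lt_top_iff_ne_top.2 fun h => ?_
  exact (top_ne_bot : (⊤ : Submodule R M) ≠ ⊥) (Submodule.eq_bot_of_le_smul_of_le_jacobson_bot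
    (IsLocalRing.maximalIdeal R) ⊤ Module.Finite.fg_top h.ge (IsLocalRing.maximalIdeal_le_jacobson _))

/-- Rees: the depth is the least degree in which `Ext_R(k, M)` does not vanish. -/
lemma rdepth_eq [IsNoetherianRing R] (M : Type u) [AddCommGroup M] [Module R M]
    [Module.Finite R M] [Nontrivial M] (d : ℕ) (h : ∀ i < d, EV R (kk R) M i)
    (hd : ¬ EV R (kk R) M d) : rdepth R M = d := by
  apply le_antisymm
  · refine sSup_le ?_
    rintro _ ⟨rs, hrs, hreg, rfl⟩
    by_contra! hlt
    exact hd (ModuleCat.subsingleton_ext_of_exists_isRegular (IsLocalRing.maximalIdeal R)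
      (ModuleCat.of R (kk R)) support_kk.subset (ModuleCat.of R M) (smul_top_lt M) rs hrs hreg d
      (by exact_mod_cast hlt))
  · obtain ⟨rs, hlen, hrs, hreg⟩ := ModuleCat.exists_isRegular_of_exists_subsingleton_ext
      (IsLocalRing.maximalIdeal R) d (ModuleCat.of R M) (smul_top_lt M)
      (ModuleCat.of R (kk R)) support_kk h
    exact le_sSup ⟨rs, hrs, hreg, by rw [hlen]⟩

lemma exists_depth [IsNoetherianRing R] :
    ∃ t : ℕ, (∀ i < t, EV R (kk R) R i) ∧ ¬ EV R (kk R) R t := by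
  classical
  suffices h : ∃ t : ℕ, ¬ EV R (kk R) R t from
    ⟨Nat.find h, fun i hi => not_not.1 (Nat.find_min h hi), Nat.find_spec h⟩
  by_contra! h
  obtain ⟨D, hD⟩ : ∃ D : ℕ, ringKrullDim R < D := by
    have h1 := ringKrullDim_lt_top (R := R)
    generalize ringKrullDim R = x at h1
    induction x using WithBot.recBotCoe with
    | bot => exact ⟨0, WithBot.bot_lt_coe _⟩
    | coe x =>
      obtain ⟨n, rfl⟩ := ENat.ne_top_iff_exists.1 (WithBot.coe_lt_coe.1 h1).ne
      exact ⟨n + 1, by exact_mod_cast Nat.lt_succ_self n⟩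
  obtain ⟨rs, hlen, hrs, hreg⟩ := ModuleCat.exists_isRegular_of_exists_subsingleton_ext
      (IsLocalRing.maximalIdeal R) D (ModuleCat.of R R) (smul_top_lt R)
      (ModuleCat.of R (kk R)) support_kk (fun i _ => h i)
  have hdim := ringKrullDim_add_length_eq_ringKrullDim_of_isRegular rs hreg
  have hne : Ideal.ofList rs ≠ ⊤ := by
    intro htop
    have : (Ideal.ofList rs) ≤ IsLocalRing.maximalIdeal R := Ideal.span_le.2 hrs
    exact IsLocalRing.maximalIdeal.isMaximal R |>.ne_top (top_le_iff.1 (htop ▸ this))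
  have : Nontrivial (R ⧸ Ideal.ofList rs) := Ideal.Quotient.nontrivial_iff.2 hne
  have h0 : 0 ≤ ringKrullDim (R ⧸ Ideal.ofList rs) := ringKrullDim_nonneg_of_nontrivial
  rw [← hdim, hlen] at hD
  refine hD.not_ge ?_
  calc (D : WithBot ℕ∞) = 0 + D := (zero_add _).symm
    _ ≤ _ := by gcongr

/-- A proper submodule of a finitely generated module is killed by some surjection onto the
residue field. -/
lemma exists_surjective_kk {A : Type u} [AddCommGroup A] [Module R A] [Module.Finite R A]
    (B : Submodule R A) (hB : B ≠ ⊤) :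
    ∃ q : A →ₗ[R] kk R, Function.Surjective q ∧ B ≤ LinearMap.ker q := by
  obtain ⟨C, hC, hBC⟩ := (eq_top_or_exists_le_coatom B).resolve_left hB
  have hs : IsSimpleModule R (A ⧸ C) := isSimpleModule_iff_isCoatom.2 hC
  obtain ⟨m, hm, ⟨e⟩⟩ := isSimpleModule_iff_quot_maximal.1 hs
  obtain rfl := IsLocalRing.eq_maximalIdeal hm
  refine ⟨e.toLinearMap ∘ₗ C.mkQ, e.surjective.comp C.mkQ_surjective, fun x hx => ?_⟩
  simpa using hBC hx

lemma smul_ext_kk {Y : ModuleCat.{u} R} {i : ℕ} (α : Abelian.Ext (ModuleCat.of R (kk R)) Y i)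
    (r : R) (hr : r ∈ IsLocalRing.maximalIdeal R) : r • α = 0 := by
  have h0 : r • 𝟙 (ModuleCat.of R (kk R)) = 0 := by
    refine ModuleCat.hom_ext (LinearMap.ext fun x => ?_)
    obtain ⟨x, rfl⟩ := Ideal.Quotient.mk_surjective x
    show r • Ideal.Quotient.mk _ x = 0
    rw [← Ideal.Quotient.mk_eq_mk, ← Submodule.Quotient.mk_smul, Submodule.Quotient.mk_eq_zero]
    exact Ideal.mul_mem_right _ _ hr
  rw [← Abelian.Ext.mk₀_id_comp α, ← Abelian.Ext.smul_comp, ← Abelian.Ext.mk₀_smul, h0]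
  simp

/-- Since `Ext_R(k, Y)` is a `k`-vector space, a nonzero such group receives a nonzero map from
every nonzero finitely generated module `A`, even one killing a given proper submodule. -/
lemma exists_to_ext_kk {Y : ModuleCat.{u} R} {i : ℕ}
    (h : ¬ Subsingleton (Abelian.Ext (ModuleCat.of R (kk R)) Y i))
    {A : Type u} [AddCommGroup A] [Module R A] [Module.Finite R A]
    (B : Submodule R A) (hB : B ≠ ⊤) :
    ∃ φ : A →ₗ[R] Abelian.Ext (ModuleCat.of R (kk R)) Y i, φ ≠ 0 ∧ B ≤ LinearMap.ker φ := by
  obtain ⟨q, hq, hBq⟩ := exists_surjective_kk B hB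
  have := not_subsingleton_iff_nontrivial.1 h
  obtain ⟨e, he⟩ := exists_ne (0 : Abelian.Ext (ModuleCat.of R (kk R)) Y i)
  let l : kk R →ₗ[R] Abelian.Ext (ModuleCat.of R (kk R)) Y i :=
    Submodule.liftQ _ (LinearMap.toSpanSingleton R _ e) fun r hr => smul_ext_kk e r hr
  refine ⟨l ∘ₗ q, fun h0 => he ?_, fun x hx => ?_⟩
  · obtain ⟨a, ha⟩ := hq (Submodule.Quotient.mk 1)
    have h1 := LinearMap.congr_fun h0 a
    rw [LinearMap.comp_apply, ha] at h1
    have hl : l (Submodule.Quotient.mk 1) = e := one_smul R e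
    rw [← hl, h1, LinearMap.zero_apply]
  · have : q x = 0 := hBq hx
    simp [this]

end Depth

/-! ### `Ext` from the residue field into a totally reflexive module -/

section ExtTR

variable [IsLocalRing R] [IsNoetherianRing R] {t : ℕ} (ht : ∀ i < t, EV R (kk R) R i)

include ht

lemma tr_ev_lt (G : Type u) [AddCommGroup G] [Module R G] [Module.Finite R G] (hG : TR R G)
    (i : ℕ) (hi : i < t) : EV R (kk R) G i := by
  induction i using Nat.strong_induction_on generalizing G with
  | _ i ih =>
    obtain ⟨n, ι, hι, hC, -⟩ := exists_cores G hG
    refine subsingleton_of_forall_eq 0 fun x => ?_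
    refine ext_comp_injective (kk R) (LinearMap.exact_map_mkQ_range ι) hι
      (Submodule.mkQ_surjective _) (fun j hj => ih j (by omega) _ hC (by omega)) x ?_
    exact (ev_free (n := n) (kk R) (ht i hi)).elim _ _

/-- A class in `Ext^t_R(k, G)` is determined by its images under the functionals of `G`. -/
lemma tr_ext_eq_zero {G : Type u} [AddCommGroup G] [Module R G] [Module.Finite R G] (hG : TR R G)
    (ξ : Abelian.Ext (ModuleCat.of R (kk R)) (ModuleCat.of R G) t)
    (h : ∀ g : G →ₗ[R] R, push ξ g = 0) : ξ = 0 := by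
  obtain ⟨n, ι, hι, hC, -⟩ := exists_cores G hG
  refine ext_comp_injective (kk R) (LinearMap.exact_map_mkQ_range ι) hι
    (Submodule.mkQ_surjective _) (fun j hj => tr_ev_lt ht _ hC j (by omega)) ξ ?_
  exact ext_free_eq_zero _ fun j => by
    rw [push_push]
    exact h _

/-- Every linear map `G* → Ext^t_R(k, R)` is evaluation at a class in `Ext^t_R(k, G)`. -/
lemma tr_exists_ext {G : Type u} [AddCommGroup G] [Module R G] [Module.Finite R G] (hG : TR R G)
    (φ : Module.Dual R G →ₗ[R] Abelian.Ext (ModuleCat.of R (kk R)) (ModuleCat.of R R) t) :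
    ∃ ξ : Abelian.Ext (ModuleCat.of R (kk R)) (ModuleCat.of R G) t,
      ∀ g : G →ₗ[R] R, push ξ g = φ g := by
  obtain ⟨n, ι, hι, hC, hu⟩ := exists_cores G hG
  obtain ⟨α, hα⟩ := exists_ext_free fun j => φ (prj n j ∘ₗ ι)
  have key : ∀ u : (Fin n → R) →ₗ[R] R, push α u = φ (u ∘ₗ ι) := by
    intro u
    have h1 : u ∘ₗ ι = ∑ j, u (Pi.single j 1) • (prj n j ∘ₗ ι) := by
      conv_lhs => rw [sum_prj' u]
      ext x
      simp
    conv_lhs => rw [sum_prj' u]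
    rw [push_sum, h1, map_sum]
    exact Finset.sum_congr rfl fun j _ => by rw [push_smul, hα, map_smul]
  have hex := LinearMap.exact_map_mkQ_range ι
  have h0 : push α (LinearMap.range ι).mkQ = 0 := by
    refine tr_ext_eq_zero ht hC _ fun c => ?_
    rw [push_push, key, LinearMap.comp_assoc, hex.linearMap_comp_eq_zero, LinearMap.comp_zero,
      map_zero]
  obtain ⟨ξ, hξ⟩ := Abelian.Ext.covariant_sequence_exact₂ (ModuleCat.of R (kk R))
    (ses_shortExact hex hι (Submodule.mkQ_surjective _)) α h0
  refine ⟨ξ, fun g => ?_⟩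
  obtain ⟨u, rfl⟩ := hu g
  rw [← push_push, ← key]
  exact congrArg (fun β => push β u) hξ

lemma tr_not_ev (hne : ¬ EV R (kk R) R t) (G : Type u) [AddCommGroup G] [Module R G]
    [Module.Finite R G] [Nontrivial G] (hG : TR R G) : ¬ EV R (kk R) G t := by
  intro h
  have hnt : Nontrivial (Module.Dual R G) := by
    by_contra hsub
    rw [not_nontrivial_iff_subsingleton] at hsub
    obtain ⟨x, hx⟩ := exists_ne (0 : G)
    refine hx (hG.bij.1 ?_)
    ext φ
    simp [Subsingleton.elim φ 0]
  obtain ⟨φ, hφ, -⟩ := exists_to_ext_kk hne (⊥ : Submodule R (Module.Dual R G)) bot_ne_top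
  obtain ⟨ξ, hξ⟩ := tr_exists_ext ht hG φ
  refine hφ (LinearMap.ext fun g => ?_)
  rw [← hξ, h.elim ξ 0, push, Abelian.Ext.zero_comp, LinearMap.zero_apply]

end ExtTR

/-! ### The Auslander–Bridger formula -/

section AuslanderBridger

/-- The data of the Auslander–Bridger formula for a module `M` of finite G-dimension over a ring
of depth `t`: `p` is the last degree in which `Ext_R(M, R)` is nonzero (so `p` is the
G-dimension of `M`), `d` is the first degree in which `Ext_R(k, M)` is nonzero (so `d` is the depth
of `M`), and `p + d = t`. -/
structure AB (R : Type u) [CommRing R] [IsLocalRing R] (M : Type u)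
    [AddCommGroup M] [Module R M] (t p d : ℕ) : Prop where
  add_eq : p + d = t
  not_ev : ¬ EV R M R p
  ev : ∀ i, p < i → EV R M R i
  ev_kk : ∀ i < d, EV R (kk R) M i
  not_ev_kk : ¬ EV R (kk R) M d
  tr : p = 0 → TR R M

variable [IsLocalRing R] [IsNoetherianRing R] {t : ℕ} (ht : ∀ i < t, EV R (kk R) R i)
  (hne : ¬ EV R (kk R) R t)

include ht hne

lemma ab_of_tr (M : Type u) [AddCommGroup M] [Module R M] [Module.Finite R M] [Nontrivial M]
    (hM : TR R M) : AB R M t 0 t where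
  add_eq := zero_add t
  not_ev h := by
    have : Subsingleton (Module.Dual R M) := (ev_zero_iff M R).1 h
    obtain ⟨x, hx⟩ := exists_ne (0 : M)
    refine hx (hM.bij.1 ?_)
    ext φ
    simp [Subsingleton.elim φ 0]
  ev i hi := by
    obtain ⟨j, rfl⟩ := Nat.exists_eq_succ_of_ne_zero hi.ne'
    exact hM.ev j
  ev_kk := tr_ev_lt ht M hM
  not_ev_kk := tr_not_ev ht hne M hM
  tr _ := hM

omit hne in
/-- If the kernel `K` of a cover of `M` by a totally reflexive module `G` has positive G-dimension,
the long exact sequences show that passing from `K` to `M` raises the G-dimension and lowers the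
depth by one. -/
lemma ab_of_pos {M G : Type u} [AddCommGroup M] [Module R M] [AddCommGroup G] [Module R G]
    [Module.Finite R G] (hG : TR R G) (f : G →ₗ[R] M) (hf : Function.Surjective f) {p d : ℕ}
    (hK : AB R (LinearMap.ker f) t p d) (hp : p ≠ 0) : ∃ d', AB R M t (p + 1) d' := by
  have hex : Function.Exact (LinearMap.ker f).subtype f := LinearMap.exact_subtype_ker_map f
  have hinj := (LinearMap.ker f).injective_subtype
  have hadd := hK.add_eq
  obtain ⟨q, rfl⟩ := Nat.exists_eq_succ_of_ne_zero hp
  rcases d with _ | d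
  · refine absurd (subsingleton_of_forall_eq 0 fun x => ?_) hK.not_ev_kk
    exact ext_comp_injective (kk R) hex hinj hf (fun j hj => by omega) x
      ((tr_ev_lt ht G hG 0 (by omega)).elim _ _)
  refine ⟨d, ⟨by omega, fun h => ?_, fun i hi => ?_, fun i hi => ?_, fun h => ?_, fun h => ?_⟩⟩
  · exact hK.not_ev (ev_con₁ R hex hinj hf (hG.ev q) h)
  · obtain ⟨j, rfl⟩ := Nat.exists_eq_succ_of_ne_zero (show i ≠ 0 by omega)
    exact ev_con₃ R hex hinj hf (hK.ev j (by omega)) (hG.ev j)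
  · exact ev_cov₃ (kk R) hex hinj hf (tr_ev_lt ht G hG i (by omega)) (hK.ev_kk _ (by omega))
  · exact hK.not_ev_kk (ev_cov₁ (kk R) hex hinj hf h (tr_ev_lt ht G hG _ (by omega)))
  · omega

/-- If `M` has a resolution `0 → K → G → M → 0` with `K` and `G` totally reflexive, then either `M`
is itself totally reflexive or its depth is `t - 1`. In the second case `G* → K*` is not
surjective; a nonzero map `K* → Ext^t_R(k, R)` killing its image corresponds to a nonzero class in
`Ext^t_R(k, K)` that dies in `Ext^t_R(k, G)`, hence comes from `Ext^{t-1}_R(k, M)`. -/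
lemma ab_of_zero {M G : Type u} [AddCommGroup M] [Module R M] [Module.Finite R M] [Nontrivial M]
    [AddCommGroup G] [Module R G] [Module.Finite R G] (hG : TR R G) (f : G →ₗ[R] M)
    (hf : Function.Surjective f) (hK : TR R (LinearMap.ker f)) : ∃ p d, AB R M t p d := by
  have hex : Function.Exact (LinearMap.ker f).subtype f := LinearMap.exact_subtype_ker_map f
  have hinj := (LinearMap.ker f).injective_subtype
  have hM2 : ∀ i, EV R M R (i + 2) := fun i => ev_con₃ R hex hinj hf (hK.ev i) (hG.ev (i + 1))
  by_cases h1 : EV R M R 1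
  · refine ⟨0, t, ab_of_tr ht hne M (tr_of_ses hex hinj hf hK hG ?_)⟩
    rintro (_ | i)
    · exact h1
    · exact hM2 i
  have hns : LinearMap.range (LinearMap.ker f).subtype.dualMap ≠ ⊤ := fun htop =>
    h1 (ev_one_of_extension R hex hinj hf
      (fun φ => LinearMap.range_eq_top.1 htop φ) (hG.ev 0))
  obtain ⟨φ, hφ, hφker⟩ := exists_to_ext_kk hne _ hns
  obtain ⟨ξ, hξ⟩ := tr_exists_ext ht hK φ
  obtain ⟨j, hj, hjM⟩ : ∃ j, j + 1 = t ∧ ¬ EV R (kk R) M j := by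
    by_contra! hcon
    have h0 : ξ = 0 := by
      refine ext_comp_injective (kk R) hex hinj hf hcon ξ ?_
      refine tr_ext_eq_zero ht hG _ fun g => ?_
      rw [push_push, hξ]
      exact hφker ⟨g, rfl⟩
    refine hφ (LinearMap.ext fun g => ?_)
    rw [← hξ, h0, push, Abelian.Ext.zero_comp, LinearMap.zero_apply]
  refine ⟨1, j, ⟨by omega, h1, fun i hi => ?_, fun i hi => ?_, hjM, fun h => by omega⟩⟩
  · obtain ⟨l, rfl⟩ := Nat.exists_eq_add_of_le' (show 2 ≤ i by omega)
    exact hM2 l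
  · exact ev_cov₃ (kk R) hex hinj hf (tr_ev_lt ht G hG i (by omega))
      (tr_ev_lt ht _ hK _ (by omega))

lemma exists_ab (n : ℕ) (M : Type u) [AddCommGroup M] [Module R M] [Module.Finite R M]
    [Nontrivial M] (hM : GdimLE R n (ModuleCat.of R M)) : ∃ p d, AB R M t p d := by
  induction n generalizing M with
  | zero => exact ⟨0, t, ab_of_tr ht hne M (tr_of_isTotallyReflexive hM)⟩
  | succ n ih =>
    obtain ⟨G, hGf, hG, f, hf, hK⟩ := hM
    have hG := tr_of_isTotallyReflexive hG
    cases subsingleton_or_nontrivial (LinearMap.ker f) with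
    | inl h => exact ab_of_zero ht hne hG f hf (tr_of_subsingleton _)
    | inr h =>
      obtain ⟨p, d, hpd⟩ := ih (LinearMap.ker f) hK
      by_cases hp : p = 0
      · exact ab_of_zero ht hne hG f hf (hpd.tr hp)
      · obtain ⟨d', h'⟩ := ab_of_pos ht hG f hf hpd hp
        exact ⟨p + 1, d', h'⟩

end AuslanderBridger

/-! ### Vanishing of `Ext_R(M, -)` on `M^⊥` -/

section Perp

variable [IsNoetherianRing R]

omit [IsNoetherianRing R] in
/-- `M^⊥` is closed under syzygies when `R ∈ M^⊥`. -/
lemma perp_ker {M : Type u} [AddCommGroup M] [Module R M] {p n : ℕ}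
    (hp : ∀ i, p < i → EV R M R i) {N : Type u} [AddCommGroup N] [Module R N]
    (π : (Fin n → R) →ₗ[R] N) (hπ : Function.Surjective π) (hN : ∃ d, ∀ i ≥ d, EV R M N i) :
    ∃ d, ∀ i ≥ d, EV R M (LinearMap.ker π) i := by
  obtain ⟨d, hd⟩ := hN
  refine ⟨d + p + 1, fun l hl => ?_⟩
  obtain ⟨l, rfl⟩ := Nat.exists_eq_succ_of_ne_zero (show l ≠ 0 by omega)
  exact ev_cov₁ M (LinearMap.exact_subtype_ker_map π) (LinearMap.ker π).injective_subtype hπ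
    (hd l (by omega)) (ev_free M (hp _ (by omega)))

/-- Dimension shifting: if `Ext^i_R(M, R) = 0` for `i > p`, the uniform bound `b` for the vanishing
of `Ext_R(M, -)` on `M^⊥` improves to `p`. The induction is on `j`, which measures how far
`i` is below the bound. -/
lemma ev_of_lt {M : Type u} [AddCommGroup M] [Module R M] {p b : ℕ}
    (hp : ∀ i, p < i → EV R M R i)
    (hb : ∀ (N : Type u) [AddCommGroup N] [Module R N] [Module.Finite R N],
      (∃ d, ∀ i ≥ d, EV R M N i) → ∀ i, b < i → EV R M N i)
    (j : ℕ) (N : Type u) [AddCommGroup N] [Module R N] [Module.Finite R N]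
    (hN : ∃ d, ∀ i ≥ d, EV R M N i) (i : ℕ) (hi : p < i) (hj : b < i + j) : EV R M N i := by
  induction j generalizing N i with
  | zero => exact hb N hN i hj
  | succ j ih =>
    obtain ⟨n, π, hπ⟩ := Module.Finite.exists_fin' R N
    have hex : Function.Exact (LinearMap.ker π).subtype π := LinearMap.exact_subtype_ker_map π
    have hinj := (LinearMap.ker π).injective_subtype
    exact ev_cov₃ M hex hinj hπ (ev_free M (hp i hi))
      (ih _ (perp_ker hp π hπ hN) (i + 1) (by omega) (by omega))

/-- A matrix `A` that is not surjective does not induce a surjection on `Ext^i_R(M, -)` if the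
finitely generated module `E = Ext^i_R(M, R)` is nonzero: that map is `A ⊗ E`, and it stays
non-surjective after reduction modulo the maximal ideal. -/
lemma not_forall_exists_push [IsLocalRing R] {M : Type u} [AddCommGroup M] [Module R M]
    [Module.Finite R M] {i m n : ℕ} (hM : ¬ EV R M R i) (A : (Fin m → R) →ₗ[R] (Fin n → R))
    (hA : LinearMap.range A ≠ ⊤) :
    ¬ ∀ α : Abelian.Ext (ModuleCat.of R M) (ModuleCat.of R (Fin n → R)) i,
      ∃ γ : Abelian.Ext (ModuleCat.of R M) (ModuleCat.of R (Fin m → R)) i, push γ A = α := by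
  intro hsurj
  have : Nontrivial (Abelian.Ext (ModuleCat.of R M) (ModuleCat.of R R) i) :=
    not_subsingleton_iff_nontrivial.1 hM
  have : Module.Finite R (Abelian.Ext (ModuleCat.of R M) (ModuleCat.of R R) i) := inferInstance
  obtain ⟨s, hs, -⟩ := exists_surjective_kk
    (⊥ : Submodule R (Abelian.Ext (ModuleCat.of R M) (ModuleCat.of R R) i)) bot_ne_top
  obtain ⟨q, hq, hqA⟩ := exists_surjective_kk _ hA
  obtain ⟨e, he⟩ := hs 1
  -- `α ↦ ∑ j, q (e_j) * s (α_j)` kills the image of `A`, hence everything.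
  have h0 : ∀ α : Abelian.Ext (ModuleCat.of R M) (ModuleCat.of R (Fin n → R)) i,
      ∑ j, q (Pi.single j 1) * s (push α (prj n j)) = 0 := by
    intro α
    obtain ⟨γ, rfl⟩ := hsurj α
    have h1 : ∀ j, s (push (push γ A) (prj n j)) =
        ∑ l, A (Pi.single l 1) j • s (push γ (prj m l)) := by
      intro j
      rw [push_push, sum_prj' (prj n j ∘ₗ A), push_sum, map_sum]
      exact Finset.sum_congr rfl fun l _ => by rw [push_smul, map_smul]; rfl
    have h2 : ∀ l, ∑ j, q (Pi.single j 1) * (A (Pi.single l 1) j • s (push γ (prj m l))) = 0 := by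
      intro l
      have h3 : q (A (Pi.single l 1)) = 0 := hqA ⟨_, rfl⟩
      have h4 : A (Pi.single l 1) = ∑ j, A (Pi.single l 1) j • Pi.single j (1 : R) := by
        ext j
        simp [Finset.sum_apply, Pi.single_apply]
      rw [h4, map_sum] at h3
      calc _ = (∑ j, q (A (Pi.single l 1) j • Pi.single j (1 : R))) * s (push γ (prj m l)) := by
            rw [Finset.sum_mul]
            refine Finset.sum_congr rfl fun j _ => ?_
            rw [map_smul, mul_smul_comm, smul_mul_assoc]
        _ = 0 := by rw [h3, zero_mul]
    simp_rw [h1, Finset.mul_sum]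
    rw [Finset.sum_comm]
    exact Finset.sum_eq_zero fun l _ => h2 l
  have hq0 : ∀ j, q (Pi.single j 1) = 0 := by
    intro j
    obtain ⟨α, hα⟩ := exists_ext_free (X := ModuleCat.of R M) (Pi.single j e : Fin n → _)
    have := h0 α
    rw [Finset.sum_eq_single j] at this
    · rwa [hα, Pi.single_eq_same, he, mul_one] at this
    · intro l _ hl
      rw [hα, Pi.single_eq_of_ne hl, map_zero, mul_zero]
    · simp
  obtain ⟨v, hv⟩ := hq 1
  have hqz : q = 0 := by
    ext j
    simpa using hq0 j
  rw [hqz] at hv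
  exact zero_ne_one hv

/-- If `p` is the last degree in which `Ext_R(M, R)` is nonzero, and it bounds the degrees in which
`Ext_R(M, -)` is nonzero on `M^⊥`, then `Ext^p_R(M, N)` is nonzero for all nonzero `N` in `M^⊥`:
it is the cokernel of the map induced by a presentation matrix of `N`. -/
lemma not_ev_of_perp [IsLocalRing R] {M : Type u} [AddCommGroup M] [Module R M]
    [Module.Finite R M] {p : ℕ} (hM : ¬ EV R M R p) (hp : ∀ i, p < i → EV R M R i)
    (hperp : ∀ (N : Type u) [AddCommGroup N] [Module R N] [Module.Finite R N],
      (∃ d, ∀ i ≥ d, EV R M N i) → ∀ i, p < i → EV R M N i)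
    (N : Type u) [AddCommGroup N] [Module R N] [Module.Finite R N] [Nontrivial N]
    (hN : ∃ d, ∀ i ≥ d, EV R M N i) : ¬ EV R M N p := by
  intro h
  obtain ⟨n, π, hπ⟩ := Module.Finite.exists_fin' R N
  obtain ⟨m, ρ, hρ⟩ := Module.Finite.exists_fin' R (LinearMap.ker π)
  have hL := perp_ker hp ρ hρ (perp_ker hp π hπ hN)
  have hex : Function.Exact (LinearMap.ker π).subtype π := LinearMap.exact_subtype_ker_map π
  have hex' : Function.Exact (LinearMap.ker ρ).subtype ρ := LinearMap.exact_subtype_ker_map ρ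
  refine not_forall_exists_push hM ((LinearMap.ker π).subtype ∘ₗ ρ) (fun htop => ?_) fun α => ?_
  · obtain ⟨x, hx⟩ := exists_ne (0 : N)
    obtain ⟨y, rfl⟩ := hπ x
    obtain ⟨z, rfl⟩ := LinearMap.range_eq_top.1 htop y
    exact hx (ρ z).2
  · obtain ⟨β, hβ⟩ := Abelian.Ext.covariant_sequence_exact₂ (ModuleCat.of R M)
      (ses_shortExact hex (LinearMap.ker π).injective_subtype hπ) α (h.elim _ _)
    obtain ⟨γ, hγ⟩ := Abelian.Ext.covariant_sequence_exact₃ (ModuleCat.of R M)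
      (ses_shortExact hex' (LinearMap.ker ρ).injective_subtype hρ) β rfl
      ((hperp _ hL (p + 1) p.lt_succ_self).elim _ _)
    refine ⟨γ, ?_⟩
    rw [← push_push]
    exact (congrArg (fun β => push β (LinearMap.ker π).subtype) hγ).trans hβ

end Perp

/-! ### Finiteness of the AB-dimension -/

lemma exists_gdimLE {M : Type u} [AddCommGroup M] [Module R M] (h : abdim R M < ⊤) :
    ∃ n, GdimLE R n (ModuleCat.of R M) := by
  by_contra! hn
  have : gdim R M = ⊤ := by
    rw [gdim, sInf_eq_top]
    rintro _ ⟨n, hn', -⟩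
    exact absurd hn' (hn n)
  rw [abdim, this] at h
  exact (lt_of_le_of_lt (le_max_left _ _) h).ne rfl

lemma exists_bound {M : Type u} [AddCommGroup M] [Module R M] (h : abdim R M < ⊤) :
    ∃ b : ℕ, ∀ (N : Type u) [AddCommGroup N] [Module R N] [Module.Finite R N],
      (∃ d, ∀ i ≥ d, EV R M N i) → ∀ i, b < i → EV R M N i := by
  obtain ⟨b, hb⟩ : ∃ b : ℕ, extPsup R M ≤ ((b : ℕ∞) : WithBot ℕ∞) := by
    have h1 : extPsup R M < ⊤ := lt_of_le_of_lt (le_max_right _ _) h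
    generalize extPsup R M = x at h1
    induction x using WithBot.recBotCoe with
    | bot => exact ⟨0, bot_le⟩
    | coe x =>
      obtain ⟨n, rfl⟩ := ENat.ne_top_iff_exists.1 (WithBot.coe_lt_coe.1 h1).ne
      exact ⟨n, le_rfl⟩
  refine ⟨b, fun N _ _ _ hN i hi => ?_⟩
  by_contra hne
  obtain ⟨d, hd⟩ := hN
  have h1 : ((i : ℕ∞) : WithBot ℕ∞) ≤ extP R M N :=
    le_sSup ⟨i, fun h => hne ((extVanishes_iff M N i).1 h), rfl⟩
  have h2 : extP R M N ≤ extPsup R M :=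
    le_sSup ⟨N, _, _, ‹_›, ⟨d, fun i hi => (extVanishes_iff M N i).2 (hd i hi)⟩, rfl⟩
  have h3 := (h1.trans h2).trans hb
  exact absurd (by exact_mod_cast h3 : i ≤ b) hi.not_ge

lemma extP_eq {M N : Type u} [AddCommGroup M] [Module R M] [AddCommGroup N] [Module R N] {p : ℕ}
    (h₁ : ¬ EV R M N p) (h₂ : ∀ i, p < i → EV R M N i) :
    extP R M N = ((p : ℕ∞) : WithBot ℕ∞) := by
  apply le_antisymm
  · refine sSup_le ?_
    rintro _ ⟨i, hi, rfl⟩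
    rw [extVanishes_iff] at hi
    have : i ≤ p := not_lt.1 fun hlt => hi (h₂ i hlt)
    exact_mod_cast this
  · exact le_sSup ⟨p, fun h => h₁ ((extVanishes_iff M N p).1 h), rfl⟩

end ABFormula

/-- Lemma 2.5: let `M`, `N` be nonzero finitely generated modules with
`AB-dim_R M < ∞`. If `P_R(M,N) < ∞` (that is, `Ext^n_R(M,N) = 0` for `n ≫ 0`), then
`P_R(M,N) = depth R - depth_R M`. -/
theorem statement5 (R : Type u) [CommRing R] [IsLocalRing R] [IsNoetherianRing R]
    (M : Type u) [AddCommGroup M] [Module R M] [Module.Finite R M] [Nontrivial M]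
    (N : Type u) [AddCommGroup N] [Module R N] [Module.Finite R N] [Nontrivial N]
    (hM : abdim R M < ⊤) (hMN : MemPerp R M N) :
    extP R M N = ((rdepth R R - rdepth R M : ℕ∞) : WithBot ℕ∞) := by
  obtain ⟨n, hn⟩ := ABFormula.exists_gdimLE hM
  obtain ⟨b, hb⟩ := ABFormula.exists_bound hM
  obtain ⟨t, ht, hne⟩ := ABFormula.exists_depth (R := R)
  obtain ⟨p, d, hpd⟩ := ABFormula.exists_ab ht hne n M hn
  have hperp : ∀ (N : Type u) [AddCommGroup N] [Module R N] [Module.Finite R N],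
      (∃ d, ∀ i ≥ d, ABFormula.EV R M N i) → ∀ i, p < i → ABFormula.EV R M N i :=
    fun N _ _ _ hN i hi => ABFormula.ev_of_lt hpd.ev hb (b + 1) N hN i hi (by omega)
  obtain ⟨c, hc⟩ := hMN
  have hN : ∃ d, ∀ i ≥ d, ABFormula.EV R M N i :=
    ⟨c, fun i hi => (ABFormula.extVanishes_iff M N i).1 (hc i hi)⟩
  rw [ABFormula.extP_eq (ABFormula.not_ev_of_perp hpd.not_ev hpd.ev hperp N hN) (hperp N hN),
    ABFormula.rdepth_eq R t ht hne, ABFormula.rdepth_eq M d hpd.ev_kk hpd.not_ev_kk,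
    ← hpd.add_eq, ← ENat.natCast_sub, Nat.add_sub_cancel]
end

section
/- Let (R, 𝔪, k) be a commutative noetherian local ring and M a nonzero finitely generated R-module. Then AB-dim_R (Ω M) = sup{ AB-dim_R M − 1, 0 }, where Ω M is the first syzygy of M. -/
/-!
Fix `0 → S → F → M → 0` with `F` finite free. The formula is equivalent to
`AB-dim S ≤ n ↔ AB-dim M ≤ n + 1` for every natural number `n`, because `AB-dim ≥ 0` always (the
G-dimension is never `-∞`). This equivalence is checked separately for the two constituents of
the AB-dimension.

* For `P`: dimension shifting `Ext^n(S, N) ≅ Ext^(n+1)(M, N)` for `n ≥ 1` shows `S^⊥ = M^⊥` and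
  that vanishing above `n` for `S` is vanishing above `n + 1` for `M`. The group `Ext^0` never
  matters, since only vanishing in degrees `> n ≥ 0` enters.
* For the G-dimension: a resolution of `S` extends by `F` to one of `M`. Conversely, given
  `0 → K → G → M → 0` with `G` totally reflexive, lifting `F → M` through `G` yields
  `0 → S → K ⊕ F → G → 0` (`GdimLE.syzygy`). Adding a free summand does not raise the G-dimension
  (`GdimLE.prod_free`), nor does passing to the kernel of a surjection onto a totally reflexive
  module (`GdimLE.of_exact`). The latter rests on `IsTotallyReflexive.of_exact`: totally
  reflexive modules are closed under kernels of epimorphisms.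

The derived-functor `Ext` has no long exact sequence in its first argument available, so
vanishing is transported to `Abelian.Ext` through projective resolutions
(`extVanishes_succ_iff`).
-/

open CategoryTheory IsLocalRing

/-! ### Vanishing of Ext and long exact sequences -/

section ExtVanishing

variable {R : Type u} [CommRing R]

/-- In positive degrees the derived-functor `Ext` of `ExtVanishes` vanishes exactly when the
derived-category `Abelian.Ext` does, both being computed by a projective resolution; this makes
the long exact sequences of `Abelian.Ext` available. -/
lemma extVanishes_succ_iff (M : Type u) [AddCommGroup M] [Module R M]
    (N : Type u) [AddCommGroup N] [Module R N] (n : ℕ) :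
    ExtVanishes R M N (n + 1) ↔
      Subsingleton (Abelian.Ext (ModuleCat.of R M) (ModuleCat.of R N) (n + 1)) := by
  let P := projectiveResolution (ModuleCat.of R M)
  have h1 : ExtVanishes R M N (n + 1) ↔
      (P.complex.linearYonedaObj R (ModuleCat.of R N)).ExactAt (n + 1) := by
    rw [HomologicalComplex.exactAt_iff_isZero_homology, ModuleCat.isZero_iff_subsingleton]
    exact ((P.isoExt (R := R) (n + 1) (ModuleCat.of R N)).toLinearEquiv.toEquiv).subsingleton_congr
  rw [h1, HomologicalComplex.exactAt_iff' _ n (n + 1) (n + 2) (by simp) (by simp),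
    ShortComplex.moduleCat_exact_iff]
  constructor
  · intro h
    refine subsingleton_of_forall_eq 0 fun α => ?_
    obtain ⟨f, hf, rfl⟩ := P.extMk_surjective α (n + 2) rfl
    rw [P.extMk_eq_zero_iff f (n + 2) rfl hf n rfl]
    exact h f hf
  · intro h f hf
    exact (P.extMk_eq_zero_iff (Y := ModuleCat.of R N) f (n + 2) rfl hf n rfl).1
      (Subsingleton.elim _ _)

lemma extVanishes_of_projective (P : Type u) [AddCommGroup P] [Module R P] [Module.Projective R P]
    (N : Type u) [AddCommGroup N] [Module R N] (n : ℕ) (hn : 0 < n) : ExtVanishes R P N n := by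
  obtain ⟨m, rfl⟩ := Nat.exists_eq_succ_of_ne_zero hn.ne'
  have : Projective (ModuleCat.of R P) := ModuleCat.projective_of_categoryTheory_projective _
  exact ModuleCat.isZero_iff_subsingleton.1
    (isZero_Ext_succ_of_projective (R := R) (ModuleCat.of R P) (ModuleCat.of R N) m)

variable {A B C : Type u} [AddCommGroup A] [Module R A] [AddCommGroup B] [Module R B]
  [AddCommGroup C] [Module R C] {i : A →ₗ[R] B} {p : B →ₗ[R] C}

lemma exists_shortExact (hi : Function.Injective i) (hp : Function.Surjective p)
    (hip : Function.Exact i p) :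
    ∃ h : ModuleCat.ofHom i ≫ ModuleCat.ofHom p = 0,
      (ShortComplex.mk (ModuleCat.ofHom i) (ModuleCat.ofHom p) h).ShortExact := by
  have h : ModuleCat.ofHom i ≫ ModuleCat.ofHom p = 0 := by
    ext x
    exact hip.apply_apply_eq_zero x
  refine ⟨h, ?_⟩
  have : Mono (ModuleCat.ofHom i) := (ModuleCat.mono_iff_injective _).2 hi
  have : Epi (ModuleCat.ofHom p) := (ModuleCat.epi_iff_surjective _).2 hp
  exact { exact := (ShortComplex.moduleCat_exact_iff _).2 fun x hx => (hip x).1 hx }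

lemma extVanishes_left (hi : Function.Injective i) (hp : Function.Surjective p)
    (hip : Function.Exact i p) (N : Type u) [AddCommGroup N] [Module R N] (n : ℕ)
    (hB : ExtVanishes R B N (n + 1)) (hC : ExtVanishes R C N (n + 2)) :
    ExtVanishes R A N (n + 1) := by
  rw [extVanishes_succ_iff] at *
  obtain ⟨w, h⟩ := exists_shortExact hi hp hip
  refine subsingleton_of_forall_eq 0 fun x => ?_
  obtain ⟨y, rfl⟩ := Abelian.Ext.contravariant_sequence_exact₁ h _ x
    (show 1 + (n + 1) = n + 1 + 1 by omega) (hC.elim _ _)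
  rw [hB.elim y 0, Abelian.Ext.comp_zero]

lemma extVanishes_middle (hi : Function.Injective i) (hp : Function.Surjective p)
    (hip : Function.Exact i p) (N : Type u) [AddCommGroup N] [Module R N] (n : ℕ)
    (hA : ExtVanishes R A N (n + 1)) (hC : ExtVanishes R C N (n + 1)) :
    ExtVanishes R B N (n + 1) := by
  rw [extVanishes_succ_iff] at *
  obtain ⟨w, h⟩ := exists_shortExact hi hp hip
  refine subsingleton_of_forall_eq 0 fun x => ?_
  obtain ⟨y, rfl⟩ := Abelian.Ext.contravariant_sequence_exact₂ h _ x (hA.elim _ _)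
  rw [hC.elim y 0, Abelian.Ext.comp_zero]

lemma extVanishes_right (hi : Function.Injective i) (hp : Function.Surjective p)
    (hip : Function.Exact i p) (N : Type u) [AddCommGroup N] [Module R N] (n : ℕ)
    (hA : ExtVanishes R A N (n + 1)) (hB : ExtVanishes R B N (n + 2)) :
    ExtVanishes R C N (n + 2) := by
  rw [extVanishes_succ_iff] at *
  obtain ⟨w, h⟩ := exists_shortExact hi hp hip
  refine subsingleton_of_forall_eq 0 fun x => ?_
  obtain ⟨y, rfl⟩ := Abelian.Ext.contravariant_sequence_exact₃ h _ x (hB.elim _ _)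
    (show 1 + (n + 1) = n + 1 + 1 by omega)
  rw [hA.elim y 0, Abelian.Ext.comp_zero]

lemma exists_extension (hi : Function.Injective i) (hp : Function.Surjective p)
    (hip : Function.Exact i p) (N : Type u) [AddCommGroup N] [Module R N]
    (hC : ExtVanishes R C N 1) (φ : A →ₗ[R] N) : ∃ ψ : B →ₗ[R] N, ψ ∘ₗ i = φ := by
  rw [extVanishes_succ_iff] at hC
  obtain ⟨w, h⟩ := exists_shortExact hi hp hip
  obtain ⟨y, hy⟩ := Abelian.Ext.contravariant_sequence_exact₁ h (ModuleCat.of R N)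
    (Abelian.Ext.mk₀ (ModuleCat.ofHom φ)) (show 1 + 0 = 0 + 1 by omega) (hC.elim _ _)
  obtain ⟨g, rfl⟩ := Abelian.Ext.mk₀_bijective _ _ |>.2 y
  rw [Abelian.Ext.mk₀_comp_mk₀] at hy
  have := (Abelian.Ext.mk₀_bijective _ _).1 hy
  exact ⟨g.hom, congrArg ModuleCat.Hom.hom this⟩

/-- The tail `Hom(B, N) → Hom(A, N) → Ext^1(C, N) → Ext^1(B, N)` of the long exact sequence. -/
lemma extVanishes_one_of_extension (hi : Function.Injective i) (hp : Function.Surjective p)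
    (hip : Function.Exact i p) (N : Type u) [AddCommGroup N] [Module R N]
    (hB : ExtVanishes R B N 1) (hext : ∀ φ : A →ₗ[R] N, ∃ ψ : B →ₗ[R] N, ψ ∘ₗ i = φ) :
    ExtVanishes R C N 1 := by
  rw [extVanishes_succ_iff] at *
  obtain ⟨w, h⟩ := exists_shortExact hi hp hip
  refine subsingleton_of_forall_eq 0 fun x => ?_
  obtain ⟨y, rfl⟩ := Abelian.Ext.contravariant_sequence_exact₃ h (ModuleCat.of R N) x
    (hB.elim _ _) (show 1 + 0 = 0 + 1 by omega)
  obtain ⟨g, rfl⟩ := Abelian.Ext.mk₀_bijective _ _ |>.2 y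
  obtain ⟨ψ, hψ⟩ := hext g.hom
  have hg : g = ModuleCat.ofHom i ≫ ModuleCat.ofHom ψ := by
    ext x
    exact (LinearMap.congr_fun hψ x).symm
  rw [hg, ← Abelian.Ext.mk₀_comp_mk₀]
  exact h.extClass_comp_assoc _

end ExtVanishing

/-! ### Totally reflexive modules -/

section TotallyReflexive

variable {R : Type u} [CommRing R]

lemma isTotallyReflexive_of_free (F : Type u) [AddCommGroup F] [Module R F] [Module.Free R F]
    [Module.Finite R F] : IsTotallyReflexive R F :=
  ⟨Module.bijective_dual_eval R F, extVanishes_of_projective F R,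
    extVanishes_of_projective (Module.Dual R F) R⟩

/-- Totally reflexive modules are closed under kernels of epimorphisms. -/
lemma IsTotallyReflexive.of_exact {A B C : Type u} [AddCommGroup A] [Module R A]
    [AddCommGroup B] [Module R B] [AddCommGroup C] [Module R C] {i : A →ₗ[R] B} {p : B →ₗ[R] C}
    (hi : Function.Injective i) (hp : Function.Surjective p) (hip : Function.Exact i p)
    (hB : IsTotallyReflexive R B) (hC : IsTotallyReflexive R C) : IsTotallyReflexive R A := by
  have hpd : Function.Injective p.dualMap := LinearMap.dualMap_injective_of_surjective hp
  have hid : Function.Surjective i.dualMap := fun φ =>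
    exists_extension hi hp hip R (hC.2.1 1 one_pos) φ
  have hd : Function.Exact p.dualMap i.dualMap := by
    intro g
    constructor
    · intro hg
      obtain ⟨h, hh⟩ := (LinearMap.exact_lcomp_of_exact_of_surjective R hip hp g).1 hg
      exact ⟨h, hh⟩
    · rintro ⟨h, rfl⟩
      ext a
      simp [hip.apply_apply_eq_zero a]
  refine ⟨⟨?_, ?_⟩, ?_, ?_⟩
  · rw [injective_iff_map_eq_zero]
    intro a ha
    apply hi
    rw [map_zero]
    apply hB.1.1
    rw [map_zero]
    ext g
    exact LinearMap.congr_fun ha (i.dualMap g)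
  · intro φ
    obtain ⟨b, hb⟩ := hB.1.2 (φ ∘ₗ i.dualMap)
    have hpb : p b = 0 := by
      apply hC.1.1
      rw [map_zero]
      ext g
      have h1 := LinearMap.congr_fun hb (p.dualMap g)
      have h2 : i.dualMap (p.dualMap g) = 0 := hd.apply_apply_eq_zero g
      simpa [h2] using h1
    obtain ⟨a, rfl⟩ := (hip b).1 hpb
    refine ⟨a, ?_⟩
    ext f
    obtain ⟨g, rfl⟩ := hid f
    exact LinearMap.congr_fun hb g
  · intro n hn
    obtain ⟨m, rfl⟩ := Nat.exists_eq_succ_of_ne_zero hn.ne'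
    exact extVanishes_left hi hp hip R m (hB.2.1 _ (by omega)) (hC.2.1 _ (by omega))
  · intro n hn
    obtain ⟨m, rfl⟩ := Nat.exists_eq_succ_of_ne_zero hn.ne'
    rcases m with _ | m
    · refine extVanishes_one_of_extension hpd hid hd R (hB.2.2 1 one_pos) fun φ => ?_
      -- By reflexivity `φ` is evaluation at some `p b`, so evaluation at `b` extends it.
      obtain ⟨c, rfl⟩ := hC.1.2 φ
      obtain ⟨b, rfl⟩ := hp c
      exact ⟨Module.Dual.eval R B b, rfl⟩
    · exact extVanishes_right hpd hid hd R m (hC.2.2 _ (by omega)) (hB.2.2 _ (by omega))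

lemma IsTotallyReflexive.of_equiv {A B : Type u} [AddCommGroup A] [Module R A]
    [AddCommGroup B] [Module R B] (e : A ≃ₗ[R] B) (hB : IsTotallyReflexive R B) :
    IsTotallyReflexive R A :=
  IsTotallyReflexive.of_exact (i := e.toLinearMap) (p := (0 : B →ₗ[R] PUnit.{u + 1})) e.injective
    (fun _ => ⟨0, rfl⟩) (fun b => ⟨fun _ => e.surjective b, fun _ => rfl⟩) hB
    (isTotallyReflexive_of_free _)

lemma IsTotallyReflexive.prod {A B : Type u} [AddCommGroup A] [Module R A]
    [AddCommGroup B] [Module R B] (hA : IsTotallyReflexive R A) (hB : IsTotallyReflexive R B) :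
    IsTotallyReflexive R (A × B) := by
  have hex : Function.Exact (LinearMap.inl R A B) (LinearMap.snd R A B) := .inl_snd
  -- Every functional on `A × B` is the sum of its restrictions to the two factors.
  have hdecomp (g : Module.Dual R (A × B)) :
      g = (LinearMap.fst R A B).dualMap (g ∘ₗ LinearMap.inl R A B) +
        (LinearMap.snd R A B).dualMap (g ∘ₗ LinearMap.inr R A B) := by
    refine LinearMap.ext fun x => ?_
    change g x = g (x.1, 0) + g (0, x.2)
    rw [← map_add, Prod.mk_add_mk, add_zero, zero_add]
  have hd : Function.Exact (LinearMap.snd R A B).dualMap (LinearMap.inl R A B).dualMap := by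
    intro g
    constructor
    · intro hg
      have h0 : g ∘ₗ LinearMap.inl R A B = 0 := hg
      refine ⟨g ∘ₗ LinearMap.inr R A B, ?_⟩
      conv_rhs => rw [hdecomp g, h0, map_zero, zero_add]
    · rintro ⟨h, rfl⟩
      ext a
      simp
  refine ⟨⟨?_, ?_⟩, ?_, ?_⟩
  · rw [injective_iff_map_eq_zero]
    rintro ⟨a, b⟩ hab
    have ha : a = 0 := hA.1.1 (by
      rw [map_zero]
      ext g
      exact LinearMap.congr_fun hab ((LinearMap.fst R A B).dualMap g))
    have hb : b = 0 := hB.1.1 (by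
      rw [map_zero]
      ext g
      exact LinearMap.congr_fun hab ((LinearMap.snd R A B).dualMap g))
    rw [ha, hb, Prod.mk_zero_zero]
  · intro φ
    obtain ⟨a, ha⟩ := hA.1.2 (φ ∘ₗ (LinearMap.fst R A B).dualMap)
    obtain ⟨b, hb⟩ := hB.1.2 (φ ∘ₗ (LinearMap.snd R A B).dualMap)
    refine ⟨(a, b), ?_⟩
    refine LinearMap.ext fun g => ?_
    have h1 := LinearMap.congr_fun ha (g ∘ₗ LinearMap.inl R A B)
    have h2 := LinearMap.congr_fun hb (g ∘ₗ LinearMap.inr R A B)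
    conv_rhs => rw [hdecomp g, map_add]
    rw [LinearMap.comp_apply] at h1 h2
    rw [← h1, ← h2]
    simp [← map_add]
  · intro n hn
    obtain ⟨m, rfl⟩ := Nat.exists_eq_succ_of_ne_zero hn.ne'
    exact extVanishes_middle LinearMap.inl_injective LinearMap.snd_surjective hex R m
      (hA.2.1 _ hn) (hB.2.1 _ hn)
  · intro n hn
    obtain ⟨m, rfl⟩ := Nat.exists_eq_succ_of_ne_zero hn.ne'
    refine extVanishes_middle
      (LinearMap.dualMap_injective_of_surjective LinearMap.snd_surjective) ?_ hd R m
      (hB.2.2 _ hn) (hA.2.2 _ hn)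
    intro f
    exact ⟨f ∘ₗ LinearMap.fst R A B, by ext; simp⟩

end TotallyReflexive

/-! ### G-dimension of a syzygy -/

section Syzygy

variable {R : Type u} [CommRing R]

lemma GdimLE.of_equiv {n : ℕ} {M N : Type u} [AddCommGroup M] [Module R M]
    [AddCommGroup N] [Module R N] (e : M ≃ₗ[R] N) (h : GdimLE R n (ModuleCat.of R M)) :
    GdimLE R n (ModuleCat.of R N) := by
  cases n with
  | zero => exact IsTotallyReflexive.of_equiv e.symm h
  | succ n =>
    obtain ⟨G, hG, hGt, f, hf, hk⟩ := h
    refine ⟨G, hG, hGt, e.toLinearMap ∘ₗ f, e.surjective.comp hf, ?_⟩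
    rw [LinearEquiv.ker_comp]
    exact hk

lemma GdimLE.prod_free {n : ℕ} {M : Type u} [AddCommGroup M] [Module R M]
    (F : Type u) [AddCommGroup F] [Module R F] [Module.Free R F] [Module.Finite R F]
    (h : GdimLE R n (ModuleCat.of R M)) : GdimLE R n (ModuleCat.of R (M × F)) := by
  cases n with
  | zero => exact IsTotallyReflexive.prod h (isTotallyReflexive_of_free F)
  | succ n =>
    obtain ⟨G, hG, hGt, f, hf, hk⟩ := h
    refine ⟨ModuleCat.of R (G × F), inferInstanceAs (Module.Finite R (G × F)),
      hGt.prod (isTotallyReflexive_of_free F), f.prodMap LinearMap.id,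
      Function.Surjective.prodMap hf Function.surjective_id, ?_⟩
    let φ : LinearMap.ker f →ₗ[R] LinearMap.ker (f.prodMap (LinearMap.id : F →ₗ[R] F)) :=
      (LinearMap.inl R G F ∘ₗ (LinearMap.ker f).subtype).codRestrict _ fun x => by
        simp
    refine GdimLE.of_equiv (LinearEquiv.ofBijective φ ⟨?_, ?_⟩) hk
    · intro x y hxy
      exact Subtype.ext (congrArg (fun z => z.1.1) hxy)
    · rintro ⟨⟨x, y⟩, hxy⟩
      obtain ⟨h1, rfl⟩ : f x = 0 ∧ y = 0 := by simpa [LinearMap.mem_ker] using hxy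
      exact ⟨⟨x, h1⟩, rfl⟩

/-- If `0 → A → B → C → 0` is exact and `C` is totally reflexive, then `G-dim A ≤ G-dim B`:
restrict the first step of a resolution of `B` to the preimage of `A`, which is totally
reflexive as the kernel of an epimorphism onto `C`. -/
lemma GdimLE.of_exact [IsNoetherianRing R] {n : ℕ} {A B C : Type u} [AddCommGroup A] [Module R A]
    [AddCommGroup B] [Module R B] [AddCommGroup C] [Module R C] {i : A →ₗ[R] B} {p : B →ₗ[R] C}
    (hi : Function.Injective i) (hp : Function.Surjective p) (hip : Function.Exact i p)
    (hB : GdimLE R n (ModuleCat.of R B)) (hC : IsTotallyReflexive R C) :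
    GdimLE R n (ModuleCat.of R A) := by
  cases n with
  | zero => exact IsTotallyReflexive.of_exact hi hp hip hB hC
  | succ n =>
    obtain ⟨H, hH, hHt, f, hf, hk⟩ := hB
    change H →ₗ[R] B at f
    let K := LinearMap.ker (p ∘ₗ f)
    have hmem (x : K) : f x ∈ LinearMap.range i := (hip _).1 x.2
    let q : K →ₗ[R] A := (LinearEquiv.ofInjective i hi).symm.toLinearMap ∘ₗ
      (f ∘ₗ K.subtype).codRestrict (LinearMap.range i) hmem
    have hq (x : K) : i (q x) = f x := by
      have := congrArg Subtype.val
        ((LinearEquiv.ofInjective i hi).apply_symm_apply ⟨f x, hmem x⟩)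
      exact this
    refine ⟨ModuleCat.of R K, inferInstanceAs (Module.Finite R K),
      IsTotallyReflexive.of_exact K.injective_subtype (hp.comp hf)
        (LinearMap.exact_subtype_ker_map (p ∘ₗ f)) hHt hC, q, ?_, ?_⟩
    · intro a
      obtain ⟨x, hx⟩ := hf (i a)
      have hxK : x ∈ K := by
        change p (f x) = 0
        rw [hx, hip.apply_apply_eq_zero]
      exact ⟨⟨x, hxK⟩, hi (by rw [hq]; exact hx)⟩
    · let φ : LinearMap.ker f →ₗ[R] LinearMap.ker q :=
        { toFun := fun x => ⟨⟨x.1, by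
              change p (f x.1) = 0
              rw [LinearMap.mem_ker.1 x.2, map_zero]⟩, hi ((hq _).trans
                ((LinearMap.mem_ker.1 x.2).trans (map_zero i).symm))⟩
          map_add' := fun _ _ => rfl
          map_smul' := fun _ _ => rfl }
      refine GdimLE.of_equiv (LinearEquiv.ofBijective φ ⟨?_, ?_⟩) hk
      · intro x y hxy
        exact Subtype.ext (congrArg (fun z => z.1.1) hxy)
      · rintro ⟨x, hx⟩
        refine ⟨⟨x.1, ?_⟩, rfl⟩
        change f x.1 = 0
        rw [← hq, LinearMap.mem_ker.1 hx, map_zero]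

variable {S F M : Type u} [AddCommGroup S] [Module R S] [AddCommGroup F] [Module R F]
  [Module.Free R F] [AddCommGroup M] [Module R M]
  {j : S →ₗ[R] F} {π : F →ₗ[R] M}

lemma GdimLE.succ_of_syzygy [Module.Finite R F] (hj : Function.Injective j)
    (hπ : Function.Surjective π)
    (hjπ : Function.Exact j π) {n : ℕ} (h : GdimLE R n (ModuleCat.of R S)) :
    GdimLE R (n + 1) (ModuleCat.of R M) := by
  refine ⟨ModuleCat.of R F, inferInstanceAs (Module.Finite R F), isTotallyReflexive_of_free F,
    π, hπ, ?_⟩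
  rw [LinearMap.exact_iff] at hjπ
  exact GdimLE.of_equiv ((LinearEquiv.ofInjective j hj).trans (LinearEquiv.ofEq _ _ hjπ.symm)) h

/-- A Schanuel-type argument: for any totally reflexive `G` mapping onto `M` with kernel `K`,
lifting `F → M` to `G` gives an exact sequence `0 → S → K × F → G → 0`. -/
lemma GdimLE.syzygy [IsNoetherianRing R] [Module.Finite R F] (hj : Function.Injective j)
    (hπ : Function.Surjective π) (hjπ : Function.Exact j π) {n : ℕ}
    (h : GdimLE R n (ModuleCat.of R M)) : GdimLE R (n - 1) (ModuleCat.of R S) := by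
  cases n with
  | zero => exact IsTotallyReflexive.of_exact hj hπ hjπ (isTotallyReflexive_of_free F) h
  | succ n =>
    obtain ⟨G, hG, hGt, f, hf, hk⟩ := h
    change G →ₗ[R] M at f
    obtain ⟨l, hl⟩ := Module.projective_lifting_property f π hf
    have hl' (x : F) : f (l x) = π x := LinearMap.congr_fun hl x
    let i : S →ₗ[R] LinearMap.ker f × F :=
      LinearMap.prod ((-(l ∘ₗ j)).codRestrict _ fun s => by
        simp [LinearMap.mem_ker, hl', hjπ.apply_apply_eq_zero]) j
    let p : LinearMap.ker f × F →ₗ[R] G := (LinearMap.ker f).subtype.coprod l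
    refine GdimLE.of_exact (i := i) (p := p) ?_ ?_ ?_ (GdimLE.prod_free F hk) hGt
    · intro s t hst
      exact hj (congrArg Prod.snd hst)
    · intro g
      obtain ⟨x, hx⟩ := hπ (f g)
      refine ⟨(⟨g - l x, ?_⟩, x), ?_⟩
      · rw [LinearMap.mem_ker, map_sub, hl', hx, sub_self]
      · simp [p]
    · rintro ⟨k, x⟩
      constructor
      · intro hkx
        have hkx : k.1 + l x = 0 := hkx
        have hx : π x = 0 := by
          rw [← hl', eq_neg_of_add_eq_zero_right hkx, map_neg, LinearMap.mem_ker.1 k.2, neg_zero]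
        obtain ⟨s, rfl⟩ := (hjπ x).1 hx
        refine ⟨s, Prod.ext (Subtype.ext ?_) rfl⟩
        exact (eq_neg_of_add_eq_zero_left hkx).symm
      · rintro ⟨s, hs⟩
        rw [← hs]
        simp [i, p]

/-- The infimum defining `gdim` is attained when finite, so no monotonicity of `GdimLE` in the
length of the resolution is needed. -/
lemma gdim_le_iff (M : Type u) [AddCommGroup M] [Module R M] (n : ℕ) :
    gdim R M ≤ n ↔ ∃ m ≤ n, GdimLE R m (ModuleCat.of R M) := by
  constructor
  · intro h
    have hne : {x : ℕ∞ | ∃ n : ℕ, GdimLE R n (ModuleCat.of R M) ∧ x = n}.Nonempty := by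
      by_contra hne
      rw [Set.not_nonempty_iff_eq_empty] at hne
      rw [gdim, hne, sInf_empty, top_le_iff] at h
      exact ENat.natCast_ne_top n h
    obtain ⟨m, hm, hme⟩ := csInf_mem hne
    refine ⟨m, ?_, hm⟩
    rw [gdim, hme] at h
    exact_mod_cast h
  · rintro ⟨m, hmn, hm⟩
    exact (sInf_le ⟨m, hm, rfl⟩ : gdim R M ≤ m).trans (by exact_mod_cast hmn)

lemma gdim_syzygy_le_iff [IsNoetherianRing R] [Module.Finite R F] (hj : Function.Injective j)
    (hπ : Function.Surjective π) (hjπ : Function.Exact j π) (n : ℕ) :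
    gdim R S ≤ n ↔ gdim R M ≤ (n + 1 : ℕ) := by
  rw [gdim_le_iff, gdim_le_iff]
  constructor
  · rintro ⟨m, hm, h⟩
    exact ⟨m + 1, by omega, h.succ_of_syzygy hj hπ hjπ⟩
  · rintro ⟨m, hm, h⟩
    exact ⟨m - 1, by omega, h.syzygy hj hπ hjπ⟩

/-! ### The invariant `P` of a syzygy -/

lemma extPsup_le_iff (M : Type u) [AddCommGroup M] [Module R M] (n : ℕ) :
    extPsup R M ≤ ((n : ℕ∞) : WithBot ℕ∞) ↔
      ∀ (N : Type u) [AddCommGroup N] [Module R N], Module.Finite R N → MemPerp R M N →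
        ∀ m > n, ExtVanishes R M N m := by
  rw [extPsup, sSup_le_iff]
  constructor
  · intro h N _ _ hN hMN m hm
    by_contra hv
    have h1 : extP R M N ≤ ((n : ℕ∞) : WithBot ℕ∞) := h _ ⟨N, _, _, hN, hMN, rfl⟩
    have h2 : ((m : ℕ∞) : WithBot ℕ∞) ≤ ((n : ℕ∞) : WithBot ℕ∞) :=
      (le_sSup ⟨m, hv, rfl⟩ : _ ≤ extP R M N).trans h1
    rw [WithBot.coe_le_coe, Nat.cast_le] at h2
    omega
  · rintro h _ ⟨N, _, _, hN, hMN, rfl⟩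
    rw [extP, sSup_le_iff]
    rintro _ ⟨m, hm, rfl⟩
    rw [WithBot.coe_le_coe, Nat.cast_le]
    by_contra hmn
    exact hm (h N hN hMN m (by omega))

lemma extVanishes_syzygy_iff (hj : Function.Injective j)
    (hπ : Function.Surjective π) (hjπ : Function.Exact j π) (N : Type u) [AddCommGroup N]
    [Module R N] (n : ℕ) (hn : 0 < n) : ExtVanishes R S N n ↔ ExtVanishes R M N (n + 1) := by
  obtain ⟨m, rfl⟩ := Nat.exists_eq_succ_of_ne_zero hn.ne'
  exact ⟨fun h => extVanishes_right hj hπ hjπ N m h (extVanishes_of_projective F N _ (by omega)),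
    fun h => extVanishes_left hj hπ hjπ N m (extVanishes_of_projective F N _ (by omega)) h⟩

lemma memPerp_syzygy_iff (hj : Function.Injective j)
    (hπ : Function.Surjective π) (hjπ : Function.Exact j π) (N : Type u) [AddCommGroup N]
    [Module R N] : MemPerp R S N ↔ MemPerp R M N := by
  constructor
  · rintro ⟨d, hd⟩
    refine ⟨d + 2, fun n hn => ?_⟩
    obtain ⟨m, rfl⟩ := Nat.exists_eq_add_of_le' hn
    exact (extVanishes_syzygy_iff hj hπ hjπ N (m + d + 1) (by omega)).1 (hd _ (by omega))
  · rintro ⟨d, hd⟩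
    exact ⟨d + 1, fun n hn => (extVanishes_syzygy_iff hj hπ hjπ N n (by omega)).2
      (hd _ (by omega))⟩

lemma extPsup_syzygy_le_iff (hj : Function.Injective j)
    (hπ : Function.Surjective π) (hjπ : Function.Exact j π) (n : ℕ) :
    extPsup R S ≤ ((n : ℕ∞) : WithBot ℕ∞) ↔ extPsup R M ≤ (((n + 1 : ℕ) : ℕ∞) : WithBot ℕ∞) := by
  rw [extPsup_le_iff, extPsup_le_iff]
  constructor
  · intro h N _ _ hN hMN m hm
    obtain ⟨m, rfl⟩ := Nat.exists_eq_succ_of_ne_zero (show m ≠ 0 by omega)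
    exact (extVanishes_syzygy_iff hj hπ hjπ N m (by omega)).1
      (h N hN ((memPerp_syzygy_iff hj hπ hjπ N).2 hMN) m (by omega))
  · intro h N _ _ hN hSN m hm
    exact (extVanishes_syzygy_iff hj hπ hjπ N m (by omega)).2
      (h N hN ((memPerp_syzygy_iff hj hπ hjπ N).1 hSN) (m + 1) (by omega))

lemma abdim_syzygy_le_iff [IsNoetherianRing R] [Module.Finite R F] (hj : Function.Injective j)
    (hπ : Function.Surjective π) (hjπ : Function.Exact j π) (n : ℕ) :
    abdim R S ≤ ((n : ℕ∞) : WithBot ℕ∞) ↔ abdim R M ≤ (((n + 1 : ℕ) : ℕ∞) : WithBot ℕ∞) := by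
  rw [abdim, abdim, max_le_iff, max_le_iff, WithBot.coe_le_coe, WithBot.coe_le_coe,
    gdim_syzygy_le_iff hj hπ hjπ, extPsup_syzygy_le_iff hj hπ hjπ]

lemma exists_abdim_eq_coe (M : Type u) [AddCommGroup M] [Module R M] :
    ∃ a : ℕ∞, abdim R M = (a : WithBot ℕ∞) := by
  have h : abdim R M ≠ ⊥ := fun h => WithBot.coe_ne_bot
    (le_bot_iff.1 (h ▸ le_max_left _ _ : ((gdim R M : ℕ∞) : WithBot ℕ∞) ≤ ⊥))
  exact ⟨_, (WithBot.coe_unbot _ h).symm⟩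

end Syzygy

/-- Proposition 2.6(1): `AB-dim_R (Ω M) = sup (AB-dim_R M - 1) 0` for a nonzero finitely
generated module `M`. -/
theorem statement6 (R : Type u) [CommRing R] [IsLocalRing R] [IsNoetherianRing R]
    (M : Type u) [AddCommGroup M] [Module R M] [Module.Finite R M] [Nontrivial M]
    (S : ModuleCat.{u} R) (hS : IsSyzygyOf R S (ModuleCat.of R M)) :
    abdim R S = max (WithBot.map (fun x => x - 1) (abdim R M)) 0 := by
  obtain ⟨F, _, _, π, hπ, -, ⟨e⟩⟩ := hS
  change F →ₗ[R] M at π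
  let j : S →ₗ[R] F := (LinearMap.ker π).subtype ∘ₗ e.toLinearMap
  have hj : Function.Injective j := (LinearMap.ker π).injective_subtype.comp e.injective
  have hjπ : Function.Exact j π := by
    intro x
    constructor
    · intro hx
      exact ⟨e.symm ⟨x, hx⟩, by simp [j]⟩
    · rintro ⟨s, rfl⟩
      exact (e s).2
  have key := abdim_syzygy_le_iff hj hπ hjπ
  obtain ⟨a, ha⟩ := exists_abdim_eq_coe (R := R) S
  obtain ⟨b, hb⟩ := exists_abdim_eq_coe (R := R) M
  rw [ha, hb, WithBot.map_coe]
  have key' : ∀ n : ℕ, a ≤ n ↔ b - 1 ≤ n := by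
    intro n
    have := key n
    rw [ha, hb, WithBot.coe_le_coe, WithBot.coe_le_coe] at this
    rw [this, tsub_le_iff_right]
    push_cast
    rfl
  have hab : a = b - 1 := by
    apply le_antisymm
    · cases h : b - 1 with
      | top => exact le_top
      | coe n => exact (key' n).2 h.le
    · cases h : a with
      | top => exact le_top
      | coe n => exact (key' n).1 h.le
  rw [hab]
  exact (max_eq_left (WithBot.coe_le_coe.2 (zero_le : (0 : ℕ∞) ≤ b - 1))).symm
end
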